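/- arXiv:2102.09143 — 2 statements merged into one kernel-verified Lean document; each statement's English description precedes it below -/
import Mathlib

section
/- Consider the zig-zag triangulation of an n-gon whose triangles are θ_i = (i, i+1, i+2) for 1 ≤ i ≤ n−2, with internal diagonals (i, i+1) for 3 ≤ i+1 ≤ n−1, equipped with the default orientation in which every vertex 2, …, n−1 is a fan center and the diagonals are oriented 2 → 3 → ⋯ → n−1. Define, by downward recursion on k starting from the given λ_{n−2,n} and [n−2,n−1,n] = θ_{n−2}, the λ-lengths λ_{k,n} and μ-invariants [k,k+1,n] via the super Ptolemy flip of the arc (k+1,k+2): λ_{k+1,k+2}·λ_{k,n} = λ_{k,k+2}λ_{k+1,n} + λ_{k,k+1}λ_{k+2,n} + √(λ_{k,k+2}λ_{k+1,n}λ_{k,k+1}λ_{k+2,n})·(product of [k+1,k+2,n] and θ_k, in the order dictated by the orientation) and [k,k+1,n]·√(λ_{k,n}λ_{k+1,k+2}) = θ_k·√(λ_{k,k+2}λ_{k+1,n}) + [k+1,k+2,n]·√(λ_{k,k+1}λ_{k+2,n}). Then for every k: √(λ_{k,n}·λ_{k+1,n}/λ_{k,k+1})·[k,k+1,n] = Σ_{i=k}^{n−2}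 Σ_{t ∈ 𝒯_{n,i+1}} wt(t)·wt(σ_i), where 𝒯_{n,i+1} is the set of super T-paths from n to i+1 in the zig-zag triangulation and wt(σ_i) = √(λ_{i,i+2}/(λ_{i,i+1}λ_{i+1,i+2}))·θ_i. -/
namespace ZigZag

/-!  Combinatorics of the zig-zag triangulation of an `n`-gon.

The vertices are labelled `1, …, n`; in convex position their cyclic
(counterclockwise) order is `1, 2, 4, 6, …, n, n-1, …, 5, 3`.  The triangles are
`θ_i = (i, i+1, i+2)` for `1 ≤ i ≤ n-2`; the internal diagonals are `(j, j+1)`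
for `2 ≤ j ≤ n-2` and the other pairs `(j, j+1)`, `(j, j+2)` are boundary edges.
The default orientation orients the diagonals `2 → 3 → ⋯ → n-1`. -/

/-- The position of the labelled vertex `v` in the convex (counterclockwise)
cyclic order `1, 2, 4, 6, …, n, n-1, …, 5, 3` of the `n`-gon. -/
def pos (n v : ℕ) : ℕ :=
  if v = 1 then 0 else if v % 2 = 0 then v / 2 else n - (v - 1) / 2

/-- For an oriented chord of the convex polygon going from position `u` to
position `v`, the position `w` lies (strictly) on its left side. -/
def inLeft (u v w : ℕ) : Bool :=
  if u < v then decide (u < w ∧ w < v) else decide (w < v ∨ u < w)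

/-- The triangle `θ_k = (k, k+1, k+2)` lies to the right of the diagonal
`(k+1, k+2)` equipped with its default orientation `k+1 → k+2`. -/
def thetaRight (n k : ℕ) : Bool :=
  ! inLeft (pos n (k + 1)) (pos n (k + 2)) (pos n k)

/-- The positive ordering on the triangles `θ_i` of the zig-zag triangulation
(with the default orientation), as a `Bool`-valued "comes before" relation: for
`i < j`, `θ_i` comes first iff `θ_i` is to the right of the oriented diagonal
separating `θ_i` from `θ_{i+1}`. -/
def posBefore (n i j : ℕ) : Bool :=
  if i < j then thetaRight n i else if j < i then ! thetaRight n j else true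

/-- Insertion into a sorted list (used to reorder the odd factors of a weight
into the positive ordering). -/
def insB {α : Type*} (le : α → α → Bool) (x : α) : List α → List α
  | [] => [x]
  | y :: t => if le x y then x :: y :: t else y :: insB le x t

/-- Insertion sort along a `Bool`-valued "comes before" relation. -/
def sortB {α : Type*} (le : α → α → Bool) : List α → List α
  | [] => []
  | x :: t => insB le x (sortB le t)

/-- Edges of the zig-zag triangulation (including boundary edges): the pairs
`{u, u+1}` and `{u, u+2}` with all labels in `{1, …, n}`. -/
def ZEdge (n u v : ℕ) : Prop :=
  1 ≤ u ∧ u ≤ n ∧ 1 ≤ v ∧ v ≤ n ∧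
    (v = u + 1 ∨ u = v + 1 ∨ v = u + 2 ∨ u = v + 2)

/-- Vertices of the auxiliary graph for the arc `(j₀, n)`: `Sum.inl u` is the
polygon vertex labelled `u`, and `Sum.inr i` is the internal vertex `θ_i` placed
in the face `(i, i+1, i+2)` (for `j₀ ≤ i ≤ n-2`, the faces crossed by the
arc). -/
abbrev V := ℕ ⊕ ℕ

/-- Adjacency in the auxiliary graph of the zig-zag triangulation for the arc
`(j₀, n)`: edges of the triangulation, `σ`-edges `σ_i = (θ_i, i+1)` joining each
internal vertex to its fan center `i+1`, and `τ`-edges `τ_{ij} = (θ_i, θ_j)`. -/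
def ZJoins (n j0 : ℕ) : V → V → Prop
  | Sum.inl u, Sum.inl v => ZEdge n u v
  | Sum.inl u, Sum.inr i => u = i + 1 ∧ j0 ≤ i ∧ i + 2 ≤ n
  | Sum.inr i, Sum.inl u => u = i + 1 ∧ j0 ≤ i ∧ i + 2 ≤ n
  | Sum.inr i, Sum.inr i' => i ≠ i' ∧ j0 ≤ i ∧ i + 2 ≤ n ∧ j0 ≤ i' ∧ i' + 2 ≤ n

/-- `ZCrossPos n j0 e m` : the auxiliary edge with endpoint pair `e` crosses the
arc `(j₀, n)`, the crossing occurring at linear position `m` along the arc: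
diagonals `(w, w+1)` with `j₀+1 ≤ w ≤ n-2` at position `2w`, and `σ`-edges
`σ_i` at position `2i+1`; `τ`-edges and boundary edges do not cross. -/
def ZCrossPos (n j0 : ℕ) : V × V → ℕ → Prop
  | (Sum.inl u, Sum.inl v), m =>
      ∃ w, ((u = w ∧ v = w + 1) ∨ (v = w ∧ u = w + 1)) ∧
        j0 + 1 ≤ w ∧ w + 2 ≤ n ∧ m = 2 * w
  | (Sum.inl _, Sum.inr i), m => m = 2 * i + 1
  | (Sum.inr i, Sum.inl _), m => m = 2 * i + 1
  | (Sum.inr _, Sum.inr _), _ => False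

/-- The endpoint pair is a `σ`-edge. -/
def isSig : V × V → Prop
  | (Sum.inl _, Sum.inr _) => True
  | (Sum.inr _, Sum.inl _) => True
  | _ => False

/-- The endpoint pair is a `τ`-edge. -/
def isTau : V × V → Prop
  | (Sum.inr _, Sum.inr _) => True
  | _ => False

/-- Equality of auxiliary edges, as unordered pairs of endpoints. -/
def pairEqV (p q : V × V) : Prop :=
  (p.1 = q.1 ∧ p.2 = q.2) ∨ (p.1 = q.2 ∧ p.2 = q.1)

/-- A super `T`-path in the zig-zag triangulation of the `n`-gon, along the arc
`(j₀, n)`; if `rev = false` it goes from `j₀` to `n`, and if `rev = true` from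
`n` to `j₀` (so that the crossing positions must decrease).  The axioms are
(T1)–(T7) of Definition 5.3 of the paper:  a sequence of vertices of the
auxiliary graph joined by pairwise distinct edges, of odd length, with
even-numbered edges crossing the arc (`σ`-edges counting as crossing),
`σ`-edges only at even and `τ`-edges only at odd positions, and crossings
occurring in order from the starting vertex. -/
structure SuperTPath (n j0 : ℕ) (rev : Bool) where
  len : ℕ
  vert : Fin (len + 1) → V
  odd_len : Odd len
  first_eq : vert 0 = Sum.inl (if rev then n else j0)
  last_eq : vert (Fin.last len) = Sum.inl (if rev then j0 else n)
  joins : ∀ i : Fin len, ZJoins n j0 (vert i.castSucc) (vert i.succ)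
  edges_distinct : ∀ i i' : Fin len, i ≠ i' →
    ¬ pairEqV (vert i.castSucc, vert i.succ) (vert i'.castSucc, vert i'.succ)
  even_cross : ∀ i : Fin len, Odd i.val →
    ∃ m, ZCrossPos n j0 (vert i.castSucc, vert i.succ) m
  sig_even : ∀ i : Fin len, isSig (vert i.castSucc, vert i.succ) → Odd i.val
  tau_odd : ∀ i : Fin len, isTau (vert i.castSucc, vert i.succ) → Even i.val
  cross_mono : ∀ i i' : Fin len, i < i' → ∀ m m',
    ZCrossPos n j0 (vert i.castSucc, vert i.succ) m →
    ZCrossPos n j0 (vert i'.castSucc, vert i'.succ) m' →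
    (if rev then m' < m else m < m')

variable {A : Type*} [Ring A]

/-- `λ`-length of an edge, with the endpoints sorted. -/
def lamE (lam : ℕ → ℕ → A) (u v : ℕ) : A := lam (min u v) (max u v)

/-- The even (scalar) part of the weight of the `k`-th step of a super `T`-path
(steps numbered from `0`; the step is an odd step of the path iff `k` is even):
an edge of the triangulation contributes its `λ`-length at odd steps and the
inverse of its `λ`-length at even steps, a `σ`-edge `σ_i` contributes
`√(λ_{i,i+2}/(λ_{i,i+1}λ_{i+1,i+2}))`, and a `τ`-edge contributes `1`. -/
noncomputable def stepWt (lam : ℕ → ℕ → A) (sqrt : A → A) (k : ℕ) : V × V → A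
  | (Sum.inl u, Sum.inl v) =>
      if k % 2 = 0 then lamE lam u v else Ring.inverse (lamE lam u v)
  | (Sum.inl _, Sum.inr i) =>
      sqrt (lamE lam i (i + 2) *
        Ring.inverse (lamE lam i (i + 1) * lamE lam (i + 1) (i + 2)))
  | (Sum.inr i, Sum.inl _) =>
      sqrt (lamE lam i (i + 2) *
        Ring.inverse (lamE lam i (i + 1) * lamE lam (i + 1) (i + 2)))
  | (Sum.inr _, Sum.inr _) => 1

/-- The index of the face whose `σ`-edge is used at a given step, if any. -/
def sigIdx : V × V → Option ℕ
  | (Sum.inl _, Sum.inr i) => some i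
  | (Sum.inr i, Sum.inl _) => some i
  | _ => none

/-- The weight of a super `T`-path: the ordered product of the even parts of the
step weights, times the product of the odd `μ`-invariants `θ_i` of the faces
whose `σ`-edges are used, taken in the positive ordering. -/
noncomputable def wt (n : ℕ) (lam : ℕ → ℕ → A) (θ : ℕ → A) (sqrt : A → A)
    {j0 : ℕ} {rev : Bool} (t : SuperTPath n j0 rev) : A :=
  ((List.finRange t.len).map
      (fun i => stepWt lam sqrt i.val (t.vert i.castSucc, t.vert i.succ))).prod *
  ((sortB (posBefore n)
      ((List.finRange t.len).filterMap
        (fun i => sigIdx (t.vert i.castSucc, t.vert i.succ)))).map θ).prod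

/-- The weight of the `σ`-edge `σ_i` (including its odd factor `θ_i`). -/
noncomputable def sigWt (lam : ℕ → ℕ → A) (θ : ℕ → A) (sqrt : A → A) (i : ℕ) : A :=
  sqrt (lamE lam i (i + 2) *
    Ring.inverse (lamE lam i (i + 1) * lamE lam (i + 1) (i + 2))) * θ i

/-- The steps of a path whose vertices are listed from its end to its start: for each step, its
index counted from the start together with its endpoints. -/
def stepsOf : List V → List (ℕ × V × V)
  | a :: b :: l => (l.length, b, a) :: stepsOf (b :: l)
  | _ => []

/-- The conditions of a super `T`-path that concern a single step. -/
structure StepOK (n j0 : ℕ) (s : ℕ × V × V) : Prop where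
  joins : ZJoins n j0 s.2.1 s.2.2
  cross : Odd s.1 → ∃ m, ZCrossPos n j0 s.2 m
  sig : isSig s.2 → Odd s.1
  tau : isTau s.2 → Even s.1

/-- The conditions of a super `T`-path running towards `j0` on a step `s` and an earlier
step `s'`. -/
def Later (n j0 : ℕ) (s s' : ℕ × V × V) : Prop :=
  ¬ pairEqV s'.2 s.2 ∧ ∀ m m', ZCrossPos n j0 s.2 m → ZCrossPos n j0 s'.2 m' → m < m'

/-- The conditions of a super `T`-path, except for those on its endpoints and its length, for a
list of vertices running from the end of the path to its start. -/
def Adm (n j0 : ℕ) (l : List V) : Prop :=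
  (∀ s ∈ stepsOf l, StepOK n j0 s) ∧ (stepsOf l).Pairwise (Later n j0)

/-- The recursive description of the super `T`-paths from `n` to `k`, listed from `k` to `n`. -/
inductive Good (n : ℕ) : ℕ → List V → Prop
  | base (k : ℕ) (hk : k + 1 = n) : Good n k [Sum.inl k, Sum.inl n]
  | replace (k : ℕ) (hk : k + 2 ≤ n) (l : List V)
      (h : Good n (k + 1) (Sum.inl (k + 1) :: Sum.inl (k + 2) :: l)) :
      Good n k (Sum.inl k :: Sum.inl (k + 2) :: l)
  | extend (k : ℕ) (hk : k + 3 ≤ n) (l : List V)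
      (h : Good n (k + 1) (Sum.inl (k + 1) :: Sum.inl (k + 3) :: l)) :
      Good n k (Sum.inl k :: Sum.inl (k + 2) :: Sum.inl (k + 1) :: Sum.inl (k + 3) :: l)
  | skip (k : ℕ) (hk : k + 3 ≤ n) (l : List V)
      (h : Good n (k + 2) (Sum.inl (k + 2) :: l)) :
      Good n k (Sum.inl k :: Sum.inl (k + 1) :: Sum.inl (k + 2) :: l)
  | jump (k i : ℕ) (hki : k < i) (hi : i + 2 ≤ n) (l : List V)
      (h : Good n (i + 1) (Sum.inl (i + 1) :: l)) :
      Good n k (Sum.inl k :: Sum.inl (k + 1) :: Sum.inr k :: Sum.inr i :: Sum.inl (i + 1) :: l)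

theorem adm_cons {n j0 : ℕ} {a b : V} {l : List V} :
    Adm n j0 (a :: b :: l) ↔ StepOK n j0 (l.length, b, a) ∧
      (∀ s ∈ stepsOf (b :: l), Later n j0 (l.length, b, a) s) ∧ Adm n j0 (b :: l) := by
  simp only [Adm, stepsOf, List.forall_mem_cons, List.pairwise_cons]
  tauto

theorem mem_of_mem_stepsOf {s : ℕ × V × V} : ∀ {l : List V}, s ∈ stepsOf l →
    s.2.1 ∈ l ∧ s.2.2 ∈ l
  | a :: b :: l, h => by
    simp only [stepsOf, List.mem_cons] at h
    rcases h with rfl | h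
    · simp
    · have := mem_of_mem_stepsOf (l := b :: l) h
      exact ⟨List.mem_cons_of_mem _ this.1, List.mem_cons_of_mem _ this.2⟩
  | [], h => by simp [stepsOf] at h
  | [_], h => by simp [stepsOf] at h

/-- The vertices that can occur, before the end, on a super `T`-path from `n` to `k`. -/
def Above (n k : ℕ) : V → Prop
  | Sum.inl u => k < u ∧ u ≤ n
  | Sum.inr i => k ≤ i ∧ i + 2 ≤ n

theorem Above.mono {n k k' : ℕ} (h : k ≤ k') {x : V} (hx : Above n k' x) : Above n k x := by
  cases x <;> simp only [Above] at * <;> omega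

theorem Good.tail_spec {n k : ℕ} {l : List V} (h : Good n k l) :
    ∃ t, l = Sum.inl k :: t ∧ Odd t.length ∧ (Sum.inl k :: t).getLast? = some (Sum.inl n) ∧
      k < n ∧ ∀ x ∈ t, Above n k x := by
  induction h with
  | base k hk => exact ⟨_, rfl, by simp, by simp, by omega, by simp [Above]; omega⟩
  | replace k hk l h ih =>
    obtain ⟨t, ht, h1, h2, h3, h4⟩ := ih
    simp only [List.cons.injEq, true_and] at ht
    subst ht
    exact ⟨_, rfl, h1, by simpa using h2, by omega, fun x hx => (h4 x hx).mono (by omega)⟩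
  | extend k hk l h ih =>
    obtain ⟨t, ht, h1, h2, h3, h4⟩ := ih
    simp only [List.cons.injEq, true_and] at ht
    subst ht
    refine ⟨_, rfl, by simpa [parity_simps] using h1, by simpa using h2, by omega, ?_⟩
    intro x hx
    rw [List.mem_cons, List.mem_cons] at hx
    rcases hx with rfl | rfl | hx
    · simp only [Above]; omega
    · simp only [Above]; omega
    · exact (h4 x hx).mono (by omega)
  | skip k hk l h ih =>
    obtain ⟨t, ht, h1, h2, h3, h4⟩ := ih
    simp only [List.cons.injEq, true_and] at ht
    subst ht
    refine ⟨_, rfl, by simpa [parity_simps] using h1, by simpa using h2, by omega, ?_⟩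
    intro x hx
    rw [List.mem_cons, List.mem_cons] at hx
    rcases hx with rfl | rfl | hx
    · simp only [Above]; omega
    · simp only [Above]; omega
    · exact (h4 x hx).mono (by omega)
  | jump k i hki hi l h ih =>
    obtain ⟨t, ht, h1, h2, h3, h4⟩ := ih
    simp only [List.cons.injEq, true_and] at ht
    subst ht
    refine ⟨_, rfl, by simpa [parity_simps] using h1, by simpa using h2, by omega, ?_⟩
    intro x hx
    simp only [List.mem_cons] at hx
    rcases hx with rfl | rfl | rfl | rfl | hx
    · simp only [Above]; omega
    · simp only [Above]; omega
    · simp only [Above]; omega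
    · simp only [Above]; omega
    · exact (h4 x hx).mono (by omega)

theorem lt_of_cross {n j0 k m : ℕ} {s : ℕ × V × V} {l : List V} (hl : ∀ x ∈ l, Above n k x)
    (hs : s ∈ stepsOf l) (hm : ZCrossPos n j0 s.2 m) : 2 * k < m := by
  obtain ⟨h1, h2⟩ := mem_of_mem_stepsOf hs
  replace h1 := hl _ h1
  replace h2 := hl _ h2
  obtain ⟨_, (u | i), (v | j)⟩ := s <;> simp only [Above, ZCrossPos] at *
  all_goals grind

theorem not_pairEqV_of_notMem {s : ℕ × V × V} {l : List V} {a b : V} (ha : a ∉ l)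
    (hs : s ∈ stepsOf l) : ¬ pairEqV s.2 (b, a) := by
  obtain ⟨h1, h2⟩ := mem_of_mem_stepsOf hs
  rintro (⟨_, h⟩ | ⟨h, _⟩) <;> simp_all

theorem adm_of_good {n j0 k : ℕ} {l : List V} (h : Good n k l) (hj : 1 ≤ j0) (hjk : j0 ≤ k) :
    Adm n j0 l := by
  induction h with
  | base k hk =>
    refine adm_cons.2 ⟨⟨?_, ?_, ?_, ?_⟩, ?_, ?_⟩ <;>
      simp [stepsOf, Adm, ZJoins, ZEdge, isSig, isTau]
    omega
  | replace k hk l h ih =>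
    obtain ⟨t, ht, h1, h2, h3, h4⟩ := h.tail_spec
    simp only [List.cons.injEq, true_and] at ht
    subst ht
    obtain ⟨-, -, hA⟩ := adm_cons.1 (ih (by omega))
    refine adm_cons.2 ⟨⟨?_, ?_, ?_, ?_⟩, ?_, hA⟩
    · grind [ZJoins, ZEdge]
    · intro h; simp [parity_simps] at h h1; exact absurd h1 (by simpa using h)
    · simp [isSig]
    · simp [isTau]
    · intro s hs
      refine ⟨not_pairEqV_of_notMem (fun h => ?_) hs, fun m m' hm => ?_⟩
      · have := h4 _ h; simp only [Above] at this; omega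
      · simp only [ZCrossPos] at hm; omega
  | extend k hk l h ih =>
    obtain ⟨t, ht, h1, h2, h3, h4⟩ := h.tail_spec
    simp only [List.cons.injEq, true_and] at ht
    subst ht
    have hA := ih (by omega)
    simp only [List.length_cons, parity_simps] at h1
    refine adm_cons.2 ⟨⟨?_, ?_, ?_, ?_⟩, ?_, adm_cons.2 ⟨⟨?_, ?_, ?_, ?_⟩, ?_, hA⟩⟩
    · grind [ZJoins, ZEdge]
    · intro h; simp only [List.length_cons, parity_simps] at h; grind
    · simp [isSig]
    · simp [isTau]
    · intro s hs
      refine ⟨not_pairEqV_of_notMem (fun h => ?_) hs, fun m m' hm => ?_⟩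
      · simp only [List.mem_cons, Sum.inl.injEq] at h
        rcases h with h | h | h | h
        · omega
        · omega
        · omega
        · have := h4 _ (List.mem_cons_of_mem _ h); simp only [Above] at this; omega
      · simp only [ZCrossPos] at hm; omega
    · grind [ZJoins, ZEdge]
    · exact fun _ => ⟨2 * (k + 1), k + 1, by omega⟩
    · simp [isSig]
    · simp [isTau]
    · intro s hs
      simp only [stepsOf, List.mem_cons] at hs
      rcases hs with rfl | hs
      · refine ⟨?_, fun m m' _ hm => ?_⟩
        · simp [pairEqV]
        · simp only [ZCrossPos] at hm; omega
      · refine ⟨fun h => not_pairEqV_of_notMem (a := Sum.inl (k + 1)) (b := Sum.inl (k + 2))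
          (fun h => ?_) hs ?_, fun m m' hm hm' => ?_⟩
        · have := h4 _ h; simp only [Above] at this; omega
        · simp only [pairEqV] at *; tauto
        · have := lt_of_cross h4 hs hm'
          simp only [ZCrossPos] at hm; omega
  | skip k hk l h ih =>
    obtain ⟨t, ht, h1, h2, h3, h4⟩ := h.tail_spec
    simp only [List.cons.injEq, true_and] at ht
    subst ht
    have hA := ih (by omega)
    refine adm_cons.2 ⟨⟨?_, ?_, ?_, ?_⟩, ?_, adm_cons.2 ⟨⟨?_, ?_, ?_, ?_⟩, ?_, hA⟩⟩
    · grind [ZJoins, ZEdge]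
    · intro h; simp only [List.length_cons, parity_simps] at h; grind
    · simp [isSig]
    · simp [isTau]
    · intro s hs
      have hab : ∀ x ∈ Sum.inl (k + 1) :: Sum.inl (k + 2) :: l, Above n k x := by
        intro x hx
        simp only [List.mem_cons] at hx
        rcases hx with rfl | rfl | hx
        · simp only [Above]; omega
        · simp only [Above]; omega
        · exact (h4 x hx).mono (by omega)
      refine ⟨not_pairEqV_of_notMem (fun h => ?_) hs, fun m m' hm hm' => ?_⟩
      · have := hab _ h; simp only [Above] at this; omega
      · have := lt_of_cross hab hs hm'
        simp only [ZCrossPos] at hm; omega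
    · grind [ZJoins, ZEdge]
    · exact fun _ => ⟨2 * (k + 1), k + 1, by omega⟩
    · simp [isSig]
    · simp [isTau]
    · intro s hs
      have hab : ∀ x ∈ Sum.inl (k + 2) :: l, Above n (k + 1) x := by
        intro x hx
        rcases List.mem_cons.1 hx with rfl | hx
        · simp only [Above]; omega
        · exact (h4 x hx).mono (by omega)
      refine ⟨not_pairEqV_of_notMem (fun h => ?_) hs, fun m m' hm hm' => ?_⟩
      · have := hab _ h; simp only [Above] at this; omega
      · have := lt_of_cross hab hs hm'
        simp only [ZCrossPos] at hm; omega
  | jump k i hki hi l h ih =>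
    obtain ⟨t, ht, h1, h2, h3, h4⟩ := h.tail_spec
    simp only [List.cons.injEq, true_and] at ht
    subst ht
    have hA := ih (by omega)
    have hab : ∀ x ∈ Sum.inl (i + 1) :: l, Above n i x := by
      intro x hx
      rcases List.mem_cons.1 hx with rfl | hx
      · simp only [Above]; omega
      · exact (h4 x hx).mono (by omega)
    have hcross : ∀ s ∈ stepsOf (Sum.inl (i + 1) :: l), ∀ m, ZCrossPos n j0 s.2 m →
        2 * i + 1 < m := by
      intro s hs m hm
      rcases l with _ | ⟨b, l⟩
      · simp [stepsOf] at hs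
      rw [stepsOf, List.mem_cons] at hs
      rcases hs with rfl | hs
      · have := h4 b (by simp)
        rcases b with u | j
        · simp only [ZCrossPos, Above] at *; omega
        · simp only [ZCrossPos, Above] at *; omega
      · have := lt_of_cross h4 hs hm
        omega
    refine adm_cons.2 ⟨⟨?_, ?_, ?_, ?_⟩, ?_, adm_cons.2 ⟨⟨?_, ?_, ?_, ?_⟩, ?_,
      adm_cons.2 ⟨⟨?_, ?_, ?_, ?_⟩, ?_, adm_cons.2 ⟨⟨?_, ?_, ?_, ?_⟩, ?_, hA⟩⟩⟩⟩
    · grind [ZJoins, ZEdge]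
    · intro h; simp only [List.length_cons, parity_simps] at h; grind
    · simp [isSig]
    · simp [isTau]
    · intro s hs
      have hab : ∀ x ∈ Sum.inl (k + 1) :: Sum.inr k :: Sum.inr i :: Sum.inl (i + 1) :: l,
          Above n k x := by
        intro x hx
        simp only [List.mem_cons] at hx
        rcases hx with rfl | rfl | rfl | rfl | hx
        · simp only [Above]; omega
        · simp only [Above]; omega
        · simp only [Above]; omega
        · simp only [Above]; omega
        · exact (h4 x hx).mono (by omega)
      refine ⟨not_pairEqV_of_notMem (fun h => ?_) hs, fun m m' hm hm' => ?_⟩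
      · have := hab _ h; simp only [Above] at this; omega
      · have := lt_of_cross hab hs hm'
        simp only [ZCrossPos] at hm; omega
    · grind [ZJoins]
    · exact fun _ => ⟨2 * k + 1, rfl⟩
    · intro _; simp only [List.length_cons, parity_simps]; grind
    · simp [isTau]
    · intro s hs
      refine ⟨not_pairEqV_of_notMem (fun h => ?_) hs, fun m m' hm hm' => ?_⟩
      · simp only [List.mem_cons, Sum.inl.injEq, reduceCtorEq, false_or] at h
        rcases h with h | h
        · omega
        · have := h4 _ h; simp only [Above] at this; omega
      · simp only [stepsOf, List.mem_cons] at hs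
        simp only [ZCrossPos] at hm
        rcases hs with rfl | rfl | hs
        · simp [ZCrossPos] at hm'
        · simp only [ZCrossPos] at hm'; omega
        · have := hcross s hs m' hm'; omega
    · grind [ZJoins]
    · intro h; simp only [List.length_cons, parity_simps] at h; grind
    · simp [isSig]
    · intro _; simp only [List.length_cons, parity_simps]; grind
    · intro s hs
      refine ⟨not_pairEqV_of_notMem (fun h => ?_) hs, fun m m' hm hm' => ?_⟩
      · simp only [List.mem_cons, Sum.inr.injEq, reduceCtorEq, false_or] at h
        rcases h with h | h
        · omega
        · have := h4 _ h; simp only [Above] at this; omega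
      · simp [ZCrossPos] at hm
    · grind [ZJoins]
    · exact fun _ => ⟨2 * i + 1, rfl⟩
    · intro _; simp only [parity_simps]; grind
    · simp [isTau]
    · intro s hs
      refine ⟨not_pairEqV_of_notMem (fun h => ?_) hs, fun m m' hm hm' => ?_⟩
      · simp only [List.mem_cons, reduceCtorEq, false_or] at h
        have := h4 _ h; simp only [Above] at this; omega
      · simp only [ZCrossPos] at hm
        have := hcross s hs m' hm'; omega

theorem good_of_adm {n j0 v : ℕ} {t : List V} (hv : j0 ≤ v) (hodd : Odd t.length)
    (hlast : (Sum.inl v :: t).getLast? = some (Sum.inl n)) (hA : Adm n j0 (Sum.inl v :: t))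
    (hpos : ∀ s ∈ stepsOf (Sum.inl v :: t), ∀ m, ZCrossPos n j0 s.2 m → 2 * v ≤ m + 1) :
    Good n v (Sum.inl v :: t) := by
  induction hd : n - v using Nat.strong_induction_on generalizing v t with
  | _ d ihd =>
  have ih : ∀ v' t', v < v' → v < n → Odd t'.length →
      (Sum.inl v' :: t').getLast? = some (Sum.inl n) → Adm n j0 (Sum.inl v' :: t') →
      (∀ s ∈ stepsOf (Sum.inl v' :: t'), ∀ m, ZCrossPos n j0 s.2 m → 2 * v' ≤ m + 1) →
      Good n v' (Sum.inl v' :: t') := fun v' t' h1 h2 h3 h4 h5 h6 =>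
    ihd (n - v') (by omega) (by omega) h3 h4 h5 h6 rfl
  clear ihd
  rcases t with _ | ⟨x, t⟩
  · simp at hodd
  obtain ⟨hs, hl, hA'⟩ := adm_cons.1 hA
  rw [List.length_cons, Nat.odd_add_one, Nat.not_odd_iff_even] at hodd
  rcases x with u | i
  swap
  · exact absurd (hs.sig trivial) (by simpa using hodd)
  have hz : ZEdge n u v := hs.joins
  rcases t with _ | ⟨y, t⟩
  · simp only [List.getLast?_cons_cons, List.getLast?_singleton, Option.some.injEq,
      Sum.inl.injEq] at hlast
    subst hlast
    obtain ⟨h1, h2, h3, h4, h5⟩ := hz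
    rcases h5 with h5 | h5 | h5 | h5
    · omega
    · exact .base v (by omega)
    · omega
    · subst h5
      exact .replace v le_rfl [] (.base (v + 1) rfl)
  obtain ⟨hs', hl', hA''⟩ := adm_cons.1 hA'
  rw [List.length_cons, Nat.even_add_one, Nat.not_even_iff_odd] at hodd
  obtain ⟨m₀, hm₀⟩ := hs'.cross hodd
  have hm₀v := hpos _ (by simp [stepsOf]) m₀ hm₀
  have hdist := (hl _ (List.mem_cons_self ..)).1
  have hlast' : (y :: t).getLast? = some (Sum.inl n) := by simpa using hlast
  have hlt : ∀ s ∈ stepsOf (y :: t), ∀ m, ZCrossPos n j0 s.2 m → m₀ < m :=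
    fun s hs m hm => (hl' s hs).2 m₀ m hm₀ hm
  simp only [pairEqV, Sum.inl.injEq] at hdist
  have shift : ∀ i, y = Sum.inl (i + 1) ∨ y = Sum.inr i → u = v + 2 → v + 3 ≤ n → 2 * v + 3 ≤ m₀ →
      Good n v (Sum.inl v :: Sum.inl u :: y :: t) := by
    intro i hy hu hvn hm
    subst hu
    have hmem : ∀ s ∈ stepsOf (Sum.inl (v + 2) :: y :: t), ∀ m, ZCrossPos n j0 s.2 m →
        2 * v + 3 ≤ m := by
      intro s hs m hcr
      rw [stepsOf, List.mem_cons] at hs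
      rcases hs with rfl | hs
      · rcases hy with rfl | rfl <;> simp only [ZCrossPos] at * <;> omega
      · exact hm.trans (hlt s hs m hcr).le
    refine .replace v (by omega) _ (ih (v + 1) _ (by omega) (by omega)
      (by simpa [parity_simps] using hodd) (by simpa using hlast') (adm_cons.2 ⟨⟨?_, ?_, ?_, ?_⟩,
        ?_, hA'⟩) ?_)
    · grind [ZJoins, ZEdge]
    · intro h
      simp only [List.length_cons, parity_simps] at h
      grind
    · simp [isSig]
    · simp [isTau]
    · intro s hs
      refine ⟨fun hp => ?_, fun m m' hm hm' => ?_⟩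
      · have : ZCrossPos n j0 s.2 (2 * (v + 1)) := by
          obtain ⟨_, p, q⟩ := s
          simp only [pairEqV] at hp
          rcases hp with ⟨rfl, rfl⟩ | ⟨rfl, rfl⟩ <;> exact ⟨v + 1, by omega⟩
        have := hmem s hs _ this
        omega
      · have := hmem s hs _ hm'
        simp only [ZCrossPos] at hm
        omega
    · intro s hs m hm
      rw [stepsOf, List.mem_cons] at hs
      rcases hs with rfl | hs
      · simp only [ZCrossPos] at hm; omega
      · have := hmem s hs m hm
        omega
  rcases y with y | i
  · simp only [Sum.inl.injEq, and_true] at hdist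
    obtain ⟨w, hw, hjw, hwn, rfl⟩ := hm₀
    have hzu := hz.2.2.2.2
    have hcases : (w = v + 1 ∧ u = v + 1 ∧ y = v + 2) ∨ (w = v + 1 ∧ u = v + 2 ∧ y = v + 1) ∨
        (w = v + 2 ∧ u = v + 2 ∧ y = v + 3) := by omega
    rcases hcases with ⟨rfl, rfl, rfl⟩ | ⟨rfl, rfl, rfl⟩ | ⟨rfl, rfl, rfl⟩
    · exact .skip v (by omega) _ (ih _ _ (by omega) (by omega) hodd hlast' hA''
        fun s hs m hm => by have := hlt s hs m hm; omega)
    · have hg := ih _ _ (by omega) (by omega) hodd hlast' hA''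
        fun s hs m hm => by have := hlt s hs m hm; omega
      cases hg with
      | base k hk => omega
      | replace k hk l h => exact .extend v (by omega) _ (.replace _ hk _ h)
      | extend k hk l h => exact .extend v (by omega) _ (.extend _ hk _ h)
      | skip k hk l h =>
        have := (hl' _ (List.mem_cons_self ..)).1
        simp [pairEqV] at this
      | jump k i hki hi l h =>
        have := (hl' _ (List.mem_cons_self ..)).1
        simp [pairEqV] at this
    · exact shift (v + 2) (Or.inl rfl) rfl (by omega) (by omega)
  · obtain ⟨hu, hi, hi'⟩ : u = i + 1 ∧ j0 ≤ i ∧ i + 2 ≤ n := hs'.joins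
    simp only [ZCrossPos] at hm₀
    subst hm₀
    have hzu := hz.2.2.2.2
    have hcases : (i = v ∧ u = v + 1) ∨ (i = v + 1 ∧ u = v + 2) := by omega
    rcases hcases with ⟨rfl, rfl⟩ | ⟨rfl, rfl⟩
    · rcases t with _ | ⟨z, t⟩
      · simp at hodd
      obtain ⟨hs₃, hl₃, hA₃⟩ := adm_cons.1 hA''
      rw [List.length_cons, Nat.odd_add_one, Nat.not_odd_iff_even] at hodd
      rcases z with z | j
      · exact absurd (hs₃.sig trivial) (by simpa using hodd)
      obtain ⟨hji, hj1, hj2, -, -⟩ : j ≠ i ∧ j0 ≤ j ∧ j + 2 ≤ n ∧ j0 ≤ i ∧ i + 2 ≤ n := hs₃.joins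
      rcases t with _ | ⟨z, t⟩
      · simp at hlast'
      obtain ⟨hs₄, hl₄, hA₄⟩ := adm_cons.1 hA₃
      rw [List.length_cons, Nat.even_add_one, Nat.not_even_iff_odd] at hodd
      rcases z with z | j'
      swap
      · have := hs₄.tau trivial
        simp only [parity_simps] at *
        grind
      obtain ⟨rfl, -, -⟩ : z = j + 1 ∧ j0 ≤ j ∧ j + 2 ≤ n := hs₄.joins
      have hj := hlt (t.length, Sum.inl (j + 1), Sum.inr j) (by simp [stepsOf]) (2 * j + 1) rfl
      refine .jump i j (by omega) hj2 _ (ih _ _ (by omega) (by omega) (by simpa using hodd)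
        (by simpa using hlast') hA₄ fun s hs m hm => ?_)
      have := (hl₄ s hs).2 (2 * j + 1) m rfl hm
      omega
    · exact shift (v + 1) (Or.inr rfl) rfl (by omega) (by omega)

theorem stepsOf_reverse_ofFn {len : ℕ} (v : Fin (len + 1) → V) :
    stepsOf (List.ofFn v).reverse =
      (List.ofFn fun i : Fin len => (i.val, v i.castSucc, v i.succ)).reverse := by
  induction len with
  | zero => simp [stepsOf]
  | succ len ih =>
    have ih := ih fun i => v i.castSucc
    rw [List.ofFn_succ_last (f := v), List.ofFn_succ_last (n := len), List.reverse_append,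
      List.reverse_append]
    rw [List.ofFn_succ_last (n := len), List.reverse_append] at ih ⊢
    simp only [List.reverse_cons, List.reverse_nil, List.nil_append, List.cons_append] at ih ⊢
    rw [stepsOf, ih]
    simp

theorem superTPath_adm {n j0 : ℕ} (t : SuperTPath n j0 true) :
    Adm n j0 (List.ofFn t.vert).reverse := by
  rw [Adm, stepsOf_reverse_ofFn, List.pairwise_reverse, List.pairwise_ofFn]
  refine ⟨?_, fun i i' h => ⟨t.edges_distinct i i' h.ne, fun m m' hm hm' => ?_⟩⟩
  · simp only [List.mem_reverse, List.mem_ofFn]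
    rintro _ ⟨i, rfl⟩
    exact ⟨t.joins i, t.even_cross i, t.sig_even i, t.tau_odd i⟩
  · exact t.cross_mono i i' h m' m hm' hm

theorem superTPath_good {n j0 : ℕ} (t : SuperTPath n j0 true) :
    Good n j0 (List.ofFn t.vert).reverse := by
  have hA := superTPath_adm t
  have hodd := t.odd_len
  have hfirst := t.first_eq
  have hlast := t.last_eq
  generalize t.vert = vert at *
  generalize t.len = len at *
  obtain ⟨len, rfl⟩ : ∃ m, len = m + 1 := ⟨len - 1, by have := hodd.pos; omega⟩
  have h : (List.ofFn vert).reverse =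
      Sum.inl j0 :: (List.ofFn fun i : Fin (len + 1) => vert i.castSucc).reverse := by
    rw [List.ofFn_succ_last, List.reverse_append]
    simp [hlast]
  have hl : (List.ofFn vert).reverse.getLast? = some (Sum.inl n) := by
    rw [List.getLast?_reverse, List.ofFn_succ, List.head?_cons, hfirst]
    rfl
  rw [h] at hA hl ⊢
  refine good_of_adm le_rfl (by simpa using hodd) hl hA fun s hs m hm => ?_
  have hz := (hA.1 s hs).joins
  obtain ⟨_, (u | i), (w | j)⟩ := s <;> simp only [ZCrossPos, ZJoins] at hm hz
  all_goals grind

theorem exists_superTPath {n j0 : ℕ} (hj : 1 ≤ j0) {l : List V} (h : Good n j0 l) :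
    ∃ t : SuperTPath n j0 true, (List.ofFn t.vert).reverse = l := by
  have hA := adm_of_good h hj le_rfl
  obtain ⟨t, rfl, hodd, hlast, -, -⟩ := h.tail_spec
  obtain ⟨len, v, hv⟩ : ∃ (len : ℕ) (v : Fin (len + 1) → V),
      Sum.inl j0 :: t = (List.ofFn v).reverse ∧ len = t.length := by
    refine ⟨t.length, fun i => (Sum.inl j0 :: t).reverse.get (i.cast (by simp)), ?_, rfl⟩
    rw [← List.reverse_eq_iff]
    refine List.ext_get (by simp) fun i h1 h2 => ?_
    rw [List.get_ofFn]
    rfl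
  obtain ⟨hv, rfl⟩ := hv
  rw [hv] at hA hlast
  rw [Adm, stepsOf_reverse_ofFn, List.pairwise_reverse, List.pairwise_ofFn] at hA
  simp only [List.mem_reverse, List.mem_ofFn, forall_exists_index,
    forall_apply_eq_imp_iff] at hA
  obtain ⟨h1, h2⟩ := hA
  refine ⟨⟨t.length, v, hodd, ?_, ?_, fun i => (h1 i).joins, fun i i' hne hp => ?_,
    fun i => (h1 i).cross, fun i => (h1 i).sig, fun i => (h1 i).tau,
    fun i i' hlt m m' hm hm' => (h2 hlt).2 m' m hm' hm⟩, hv.symm⟩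
  · rw [List.getLast?_reverse, List.ofFn_succ, List.head?_cons] at hlast
    simpa using hlast
  · rw [List.ofFn_succ_last, List.reverse_append] at hv
    simp only [List.reverse_cons, List.reverse_nil, List.nil_append, List.cons_append,
      List.cons.injEq] at hv
    simpa using hv.1.symm
  · rcases lt_or_gt_of_ne hne with hlt | hlt
    · exact (h2 hlt).1 hp
    · refine (h2 hlt).1 ?_
      simp only [pairEqV] at hp ⊢
      grind

theorem superTPath_ext {n j0 : ℕ} {rev : Bool} :
    Function.Injective fun t : SuperTPath n j0 rev => (List.ofFn t.vert).reverse := by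
  intro t t' h
  have h := List.ofFn_inj'.1 (List.reverse_injective h)
  cases t
  cases t'
  simp only [Sigma.mk.injEq, Nat.add_right_cancel_iff] at h
  obtain ⟨rfl, h⟩ := h
  obtain rfl := eq_of_heq h
  rfl

theorem range_superTPath {n j0 : ℕ} (hj : 1 ≤ j0) :
    Set.range (fun t : SuperTPath n j0 true => (List.ofFn t.vert).reverse) =
      {l | Good n j0 l} :=
  Set.Subset.antisymm (Set.range_subset_iff.2 superTPath_good)
    fun _ h => exists_superTPath hj h

/-- The even part of the weight of a path listed from its end. -/
noncomputable def evenWt (lam : ℕ → ℕ → A) (sqrt : A → A) (l : List V) : A :=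
  ((stepsOf l).reverse.map fun s => stepWt lam sqrt s.1 s.2).prod

/-- The indices of the `σ`-edges of a path listed from its end, in the order of traversal. -/
def sigIdxs (l : List V) : List ℕ :=
  (stepsOf l).reverse.filterMap fun s => sigIdx s.2

/-- The odd part of the weight of a path listed from its end. -/
def oddWt (n : ℕ) (θ : ℕ → A) (l : List V) : A :=
  ((sortB (posBefore n) (sigIdxs l)).map θ).prod

theorem wt_eq {n j0 : ℕ} {rev : Bool} (lam : ℕ → ℕ → A) (θ : ℕ → A) (sqrt : A → A)
    (t : SuperTPath n j0 rev) :
    wt n lam θ sqrt t = evenWt lam sqrt (List.ofFn t.vert).reverse *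
      oddWt n θ (List.ofFn t.vert).reverse := by
  simp only [wt, evenWt, oddWt, sigIdxs, stepsOf_reverse_ofFn, List.reverse_reverse]
  simp only [List.ofFn_eq_map, List.map_map, List.filterMap_map]
  rfl

theorem finsum_wt {n j0 : ℕ} (hj : 1 ≤ j0) (lam : ℕ → ℕ → A) (θ : ℕ → A) (sqrt : A → A) :
    ∑ᶠ t : SuperTPath n j0 true, wt n lam θ sqrt t =
      ∑ᶠ l ∈ {l | Good n j0 l}, evenWt lam sqrt l * oddWt n θ l := by
  rw [← range_superTPath hj, finsum_mem_range superTPath_ext]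
  exact finsum_congr (wt_eq lam θ sqrt)

theorem evenWt_cons (lam : ℕ → ℕ → A) (sqrt : A → A) (a b : V) (l : List V) :
    evenWt lam sqrt (a :: b :: l) = evenWt lam sqrt (b :: l) * stepWt lam sqrt l.length (b, a) := by
  simp [evenWt, stepsOf]

theorem sigIdxs_cons (a b : V) (l : List V) :
    sigIdxs (a :: b :: l) = sigIdxs (b :: l) ++ (sigIdx (b, a)).toList := by
  simp only [sigIdxs, stepsOf, List.reverse_cons, List.filterMap_append]
  cases h : sigIdx (b, a) <;> simp [h]

theorem sortB_append_of_before {α : Type*} (le : α → α → Bool) (a : α) (l : List α)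
    (h : ∀ x ∈ l, le x a = true) : sortB le (l ++ [a]) = sortB le l ++ [a] := by
  have ins : ∀ x, le x a = true → ∀ s, insB le x (s ++ [a]) = insB le x s ++ [a] := by
    intro x hx s
    induction s with
    | nil => simp [insB, hx]
    | cons y s ih => by_cases hxy : le x y = true <;> simp [insB, hxy, ih]
  induction l with
  | nil => simp [sortB, insB]
  | cons x l ih =>
    simp only [List.forall_mem_cons] at h
    simp [sortB, ih h.2, ins x h.1]

theorem sortB_append_of_not_before {α : Type*} (le : α → α → Bool) (a : α) (l : List α)
    (h : ∀ x ∈ l, le x a = false) : sortB le (l ++ [a]) = a :: sortB le l := by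
  induction l with
  | nil => simp [sortB, insB]
  | cons x l ih =>
    simp only [List.forall_mem_cons] at h
    simp [sortB, ih h.2, insB, h.1]

theorem sortB_posBefore_append (n k : ℕ) (l : List ℕ) (h : ∀ x ∈ l, k < x) :
    sortB (posBefore n) (l ++ [k]) =
      if thetaRight n k then k :: sortB (posBefore n) l else sortB (posBefore n) l ++ [k] := by
  have hb : ∀ x ∈ l, posBefore n x k = ! thetaRight n k := fun x hx => by
    have := h x hx
    simp [posBefore, this, this.not_gt]
  split_ifs with hk
  · exact sortB_append_of_not_before _ _ _ fun x hx => by simp [hb x hx, hk]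
  · exact sortB_append_of_before _ _ _ fun x hx => by simp [hb x hx, hk]

/-- Extends a path ending at `k + 1` to one whose last step goes from `k + 2` to `k`, cancelling
the step from `k + 2` to `k + 1` if there is one. -/
def lengthen (k : ℕ) : List V → List V
  | _ :: b :: l =>
    if b = Sum.inl (k + 2) then Sum.inl k :: b :: l
    else Sum.inl k :: Sum.inl (k + 2) :: Sum.inl (k + 1) :: b :: l
  | l => l

theorem Good.shape {n k : ℕ} {l : List V} (h : Good n k l) :
    (∃ l', l = Sum.inl k :: Sum.inl (k + 1) :: l') ∨
      (k + 2 ≤ n ∧ ∃ l', l = Sum.inl k :: Sum.inl (k + 2) :: l') := by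
  cases h with
  | base k hk => exact .inl ⟨_, by rw [hk]⟩
  | replace k hk l h => exact .inr ⟨hk, _, rfl⟩
  | extend k hk l h => exact .inr ⟨by omega, _, rfl⟩
  | skip k hk l h => exact .inl ⟨_, rfl⟩
  | jump k i hki hi l h => exact .inl ⟨_, rfl⟩

theorem setOf_good_base {n k : ℕ} (hk : k + 1 = n) :
    {l | Good n k l} = {[Sum.inl k, Sum.inl n]} := by
  ext l
  simp only [Set.mem_ofPred_eq, Set.mem_singleton_iff]
  refine ⟨fun h => ?_, fun h => h ▸ .base k hk⟩
  cases h <;> first | rfl | omega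

theorem setOf_good_empty {n k : ℕ} (hk : n ≤ k) : {l | Good n k l} = ∅ := by
  ext l
  simp only [Set.mem_ofPred_eq, Set.mem_empty_iff_false, iff_false]
  intro h
  obtain ⟨-, -, -, -, h, -⟩ := h.tail_spec
  omega

theorem setOf_good_eq {n k : ℕ} (hk : k + 2 ≤ n) :
    {l | Good n k l} = lengthen k '' {l | Good n (k + 1) l} ∪
      ((fun l => Sum.inl k :: Sum.inl (k + 1) :: l) '' {l | Good n (k + 2) l} ∪
        ⋃ i ∈ Set.Icc (k + 1) (n - 2),
          (fun l => Sum.inl k :: Sum.inl (k + 1) :: Sum.inr k :: Sum.inr i :: l) ''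
            {l | Good n (i + 1) l}) := by
  ext l
  simp only [Set.mem_ofPred_eq, Set.mem_union, Set.mem_image, Set.mem_iUnion, exists_prop,
    Set.mem_Icc]
  constructor
  · intro h
    cases h with
    | base k hk => omega
    | replace k hk l h => exact .inl ⟨_, h, by simp [lengthen]⟩
    | extend k hk l h => exact .inl ⟨_, h, by simp [lengthen]⟩
    | skip k hk l h => exact .inr (.inl ⟨_, h, rfl⟩)
    | jump k i hki hi l h => exact .inr (.inr ⟨i, by omega, _, h, rfl⟩)
  · rintro (⟨l, h, rfl⟩ | ⟨l, h, rfl⟩ | ⟨i, hi, l, h, rfl⟩)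
    · rcases h.shape with ⟨l', rfl⟩ | ⟨hk', l', rfl⟩
      · simpa [lengthen] using Good.replace k hk _ h
      · simpa [lengthen] using Good.extend k hk' _ h
    · obtain ⟨t, rfl, -, -, hlt, -⟩ := h.tail_spec
      exact .skip k hlt _ h
    · obtain ⟨t, rfl, -, -, hlt, -⟩ := h.tail_spec
      exact .jump k i (by omega) (by omega) _ h

theorem finite_setOf_good (n k : ℕ) : {l | Good n k l}.Finite := by
  induction hd : n - k using Nat.strong_induction_on generalizing k with
  | _ d ih =>
  rcases lt_trichotomy (k + 1) n with h | h | h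
  · rw [setOf_good_eq (by omega)]
    refine ((ih _ ?_ (k + 1) rfl).image _).union (((ih _ ?_ (k + 2) rfl).image _).union
      ((Set.finite_Icc _ _).biUnion fun i hi => (ih _ ?_ (i + 1) rfl).image _))
    · omega
    · omega
    · rw [Set.mem_Icc] at hi
      omega
  · rw [setOf_good_base h]
    exact Set.finite_singleton _
  · rw [setOf_good_empty (by omega)]
    exact Set.finite_empty

theorem injOn_lengthen (n k : ℕ) : Set.InjOn (lengthen k) {l | Good n (k + 1) l} := by
  intro l hl l' hl' h
  rcases Good.shape hl with ⟨t, rfl⟩ | ⟨-, t, rfl⟩ <;>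
    rcases Good.shape hl' with ⟨t', rfl⟩ | ⟨-, t', rfl⟩ <;>
    simp [lengthen] at h ⊢
  · exact h
  · obtain ⟨s, hs, h1, -, h3, h4⟩ := Good.tail_spec hl
    simp only [List.cons.injEq, true_and] at hs
    subst hs
    subst h
    have := h4 (Sum.inl (k + 1)) (by simp)
    simp only [Above] at this
    omega
  · obtain ⟨s, hs, h1, -, h3, h4⟩ := Good.tail_spec hl'
    simp only [List.cons.injEq, true_and] at hs
    subst hs
    subst h
    have := h4 (Sum.inl (k + 1)) (by simp)
    simp only [Above] at this
    omega
  · exact h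

theorem finsum_good {M : Type*} [AddCommMonoid M] (f : List V → M) {n k : ℕ} (hk : k + 2 ≤ n) :
    ∑ᶠ l ∈ {l | Good n k l}, f l = ∑ᶠ l ∈ {l | Good n (k + 1) l}, f (lengthen k l) +
      (∑ᶠ l ∈ {l | Good n (k + 2) l}, f (Sum.inl k :: Sum.inl (k + 1) :: l) +
        ∑ i ∈ Finset.Icc (k + 1) (n - 2), ∑ᶠ l ∈ {l | Good n (i + 1) l},
          f (Sum.inl k :: Sum.inl (k + 1) :: Sum.inr k :: Sum.inr i :: l)) := by
  have hfin : ∀ i ∈ Set.Icc (k + 1) (n - 2),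
      ((fun l : List V => Sum.inl k :: Sum.inl (k + 1) :: Sum.inr k :: Sum.inr i :: l) ''
            {l | Good n (i + 1) l}).Finite := fun i _ => (finite_setOf_good n (i + 1)).image _
  rw [setOf_good_eq hk, finsum_mem_union, finsum_mem_union, finsum_mem_image (injOn_lengthen n k),
    finsum_mem_image (by intro; simp), finsum_mem_biUnion _ (Set.finite_Icc _ _) hfin]
  · congr 2
    rw [← Finset.coe_Icc, finsum_mem_coe_finset]
    exact Finset.sum_congr rfl fun i _ => finsum_mem_image (by intro; simp)
  · intro i _ j _ hij
    simp only [Function.onFun, Set.disjoint_left]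
    rintro _ ⟨l, hl, rfl⟩ ⟨l', hl', h⟩
    simp at h
    exact hij h.1.symm
  · rw [Set.disjoint_left]
    rintro _ ⟨l, hl, rfl⟩ h
    simp only [Set.mem_iUnion] at h
    obtain ⟨i, hi, l', -, h⟩ := h
    obtain ⟨t, rfl, -⟩ := Good.tail_spec hl
    simp at h
  · exact (finite_setOf_good n (k + 2)).image _
  · exact (Set.finite_Icc _ _).biUnion hfin
  · rw [Set.disjoint_left]
    rintro _ ⟨l, hl, rfl⟩ h
    simp only [Set.mem_iUnion, Set.mem_union, Set.mem_image] at h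
    rcases Good.shape hl with ⟨t, rfl⟩ | ⟨-, t, rfl⟩ <;> simp [lengthen] at h
  · exact (finite_setOf_good n (k + 1)).image _
  · exact ((finite_setOf_good n (k + 2)).image _).union ((Set.finite_Icc _ _).biUnion hfin)

theorem sigIdxs_lengthen {n k : ℕ} {l : List V} (h : Good n (k + 1) l) :
    sigIdxs (lengthen k l) = sigIdxs l := by
  rcases h.shape with ⟨t, rfl⟩ | ⟨-, t, rfl⟩
  · rcases t with _ | ⟨b, t⟩ <;> simp [lengthen, sigIdxs_cons, sigIdx]
  · rcases t with _ | ⟨b, t⟩ <;> simp [lengthen, sigIdxs_cons, sigIdx]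

theorem sigIdxs_skip {n k : ℕ} {l : List V} (h : Good n (k + 2) l) :
    sigIdxs (Sum.inl k :: Sum.inl (k + 1) :: l) = sigIdxs l := by
  obtain ⟨t, rfl, -⟩ := h.tail_spec
  simp [sigIdxs_cons, sigIdx]

theorem sigIdxs_jump {n k i : ℕ} {l : List V} (h : Good n (i + 1) l) :
    sigIdxs (Sum.inl k :: Sum.inl (k + 1) :: Sum.inr k :: Sum.inr i :: l) =
      sigIdxs l ++ [i] ++ [k] := by
  obtain ⟨t, rfl, -⟩ := h.tail_spec
  simp [sigIdxs_cons, sigIdx]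

theorem Good.le_of_mem_sigIdxs {n k : ℕ} {l : List V} (h : Good n k l) :
    ∀ x ∈ sigIdxs l, k ≤ x ∧ x + 2 ≤ n := by
  obtain ⟨t, rfl, -, -, -, h4⟩ := h.tail_spec
  intro x hx
  simp only [sigIdxs, List.mem_filterMap, List.mem_reverse] at hx
  obtain ⟨⟨m, a, b⟩, hs, hx⟩ := hx
  obtain ⟨h1, h2⟩ := mem_of_mem_stepsOf hs
  have hr : ∀ i, Sum.inr i ∈ (Sum.inl k :: t : List V) → k ≤ i ∧ i + 2 ≤ n := fun i hi => by
    simp only [List.mem_cons, reduceCtorEq, false_or] at hi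
    exact h4 _ hi
  rcases a with u | i <;> rcases b with v | j <;>
    simp only [sigIdx, reduceCtorEq, Option.some.injEq] at hx
  · subst hx; exact hr _ h2
  · subst hx; exact hr _ h1

/-- An odd factor pair `θ_k`, `x` in the positive order, where `x` involves later triangles. -/
def ordMul (n : ℕ) (θ : ℕ → A) (k : ℕ) (x : A) : A :=
  if thetaRight n k then θ k * x else x * θ k

theorem oddWt_append (n : ℕ) (θ : ℕ → A) {k : ℕ} {l : List ℕ} (h : ∀ x ∈ l, k < x) :
    ((sortB (posBefore n) (l ++ [k])).map θ).prod =
      ordMul n θ k ((sortB (posBefore n) l).map θ).prod := by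
  rw [sortB_posBefore_append n k l h, ordMul]
  split_ifs <;> simp

theorem oddWt_jump_eq_ordMul (n : ℕ) (θ : ℕ → A) {k i : ℕ} (hki : k < i) {l : List V}
    (h : Good n (i + 1) l) :
    oddWt n θ (Sum.inl k :: Sum.inl (k + 1) :: Sum.inr k :: Sum.inr i :: l) =
      ordMul n θ k (ordMul n θ i (oddWt n θ l)) := by
  have hb := h.le_of_mem_sigIdxs
  rw [oddWt, sigIdxs_jump h, oddWt_append, oddWt_append, oddWt]
  · intro x hx; have := hb x hx; omega
  · simp only [List.mem_append, List.mem_singleton]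
    rintro x (hx | rfl)
    · have := hb x hx; omega
    · exact hki

theorem oddWt_comm {n : ℕ} {θ : ℕ → A}
    (hθ : ∀ i j, 1 ≤ i → i ≤ n - 2 → 1 ≤ j → j ≤ n - 2 → θ i * θ j = -(θ j * θ i))
    {k : ℕ} {l : List V} (h : Good n k l) (hk : 1 ≤ k) {j : ℕ} (hj : 1 ≤ j) (hjn : j ≤ n - 2) :
    oddWt n θ l * θ j = θ j * oddWt n θ l := by
  induction h with
  | base k hk => simp [oddWt, sigIdx, sigIdxs, stepsOf, sortB]
  | replace k hk l h ih =>
    have := sigIdxs_lengthen h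
    simp only [lengthen, if_true] at this
    simpa only [oddWt, this] using ih (by omega)
  | extend k hk l h ih =>
    have := sigIdxs_lengthen h
    simp only [lengthen, Sum.inl.injEq, Nat.add_left_cancel_iff, if_false,
      show ¬ (3 = 2) by omega] at this
    simpa only [oddWt, this] using ih (by omega)
  | skip k hk l h ih => simpa only [oddWt, sigIdxs_skip h] using ih (by omega)
  | jump k i hki hi l h ih =>
    have ih : SemiconjBy (θ j) _ _ := (ih (by omega)).symm
    have hanti : ∀ a, 1 ≤ a → a ≤ n - 2 → SemiconjBy (θ j) (θ a) (-θ a) := fun a ha han => by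
      rw [SemiconjBy, neg_mul, hθ j a hj hjn ha han]
    have h1 := hanti k (by omega) (by omega)
    have h2 := hanti i (by omega) (by omega)
    rw [oddWt_jump_eq_ordMul n θ hki h]
    unfold ordMul
    split_ifs
    · simpa using (h1.mul_right (h2.mul_right ih)).eq.symm
    · simpa using (h1.mul_right (ih.mul_right h2)).eq.symm
    · simpa using ((h2.mul_right ih).mul_right h1).eq.symm
    · simpa using ((ih.mul_right h2).mul_right h1).eq.symm

theorem oddWt_jump {n : ℕ} {θ : ℕ → A}
    (hθ : ∀ i j, 1 ≤ i → i ≤ n - 2 → 1 ≤ j → j ≤ n - 2 → θ i * θ j = -(θ j * θ i))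
    {k i : ℕ} (hk : 1 ≤ k) (hki : k < i) (hi : i ≤ n - 2) {l : List V} (h : Good n (i + 1) l) :
    oddWt n θ (Sum.inl k :: Sum.inl (k + 1) :: Sum.inr k :: Sum.inr i :: l) =
      oddWt n θ l * ordMul n θ k (θ i) := by
  rw [oddWt_jump_eq_ordMul n θ hki h]
  have h1 := oddWt_comm hθ h (by omega) (j := k) (by omega) (by omega)
  have h2 := oddWt_comm hθ h (by omega) (j := i) (by omega) (by omega)
  unfold ordMul
  generalize oddWt n θ _ = x at *
  split_ifs <;> grind

/-- A multiplicative choice of central square roots on a set of central units. -/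
structure IsSqrtCone (Pos : Set A) (sqrt : A → A) : Prop where
  mul_mem : ∀ p ∈ Pos, ∀ q ∈ Pos, p * q ∈ Pos
  inverse_mem : ∀ p ∈ Pos, Ring.inverse p ∈ Pos
  comm : ∀ p ∈ Pos, ∀ x : A, p * x = x * p
  isUnit : ∀ p ∈ Pos, IsUnit p
  sqrt_mul_self : ∀ p ∈ Pos, sqrt p * sqrt p = p
  sqrt_mem : ∀ p ∈ Pos, sqrt p ∈ Pos
  sqrt_mul : ∀ p ∈ Pos, ∀ q ∈ Pos, sqrt (p * q) = sqrt p * sqrt q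

namespace IsSqrtCone

variable {Pos : Set A} {sqrt : A → A}

theorem mul_inverse (hP : IsSqrtCone Pos sqrt) {p : A} (hp : p ∈ Pos) :
    p * Ring.inverse p = 1 :=
  Ring.mul_inverse_cancel p (hP.isUnit p hp)

theorem sqrt_mul_sqrt_inverse (hP : IsSqrtCone Pos sqrt) {p : A} (hp : p ∈ Pos) :
    sqrt p * sqrt (Ring.inverse p) = 1 := by
  have h1 : (1 : A) ∈ Pos := hP.mul_inverse hp ▸ hP.mul_mem _ hp _ (hP.inverse_mem p hp)
  have h := hP.sqrt_mul 1 h1 1 h1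
  rw [hP.sqrt_mul_self 1 h1, one_mul] at h
  rw [← hP.sqrt_mul _ hp _ (hP.inverse_mem p hp), hP.mul_inverse hp, h]

theorem exists_root (hP : IsSqrtCone Pos sqrt) {p : A} (hp : p ∈ Pos) :
    ∃ r s : Subring.center A, sqrt p = r ∧ sqrt (Ring.inverse p) = s ∧ r * s = 1 ∧
      p = (r * r : Subring.center A) ∧ Ring.inverse p = (s * s : Subring.center A) := by
  have hi := hP.inverse_mem p hp
  have hc : ∀ q ∈ Pos, q ∈ Subring.center A := fun q hq =>
    Subring.mem_center_iff.2 fun x => (hP.comm q hq x).symm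
  refine ⟨⟨sqrt p, hc _ (hP.sqrt_mem p hp)⟩, ⟨sqrt (Ring.inverse p), hc _ (hP.sqrt_mem _ hi)⟩,
    rfl, rfl, Subtype.ext (hP.sqrt_mul_sqrt_inverse hp), ?_, ?_⟩
  · exact (hP.sqrt_mul_self p hp).symm
  · exact (hP.sqrt_mul_self _ hi).symm

end IsSqrtCone

/-- The square root in the weight of the `σ`-edge `σ_i`. -/
noncomputable def sigRoot (lam : ℕ → ℕ → A) (sqrt : A → A) (i : ℕ) : A :=
  sqrt (lamE lam i (i + 2) * Ring.inverse (lamE lam i (i + 1) * lamE lam (i + 1) (i + 2)))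

theorem lamE_of_le {A : Type*} (lam : ℕ → ℕ → A) {u v : ℕ} (h : u ≤ v) :
    lamE lam u v = lam u v := by
  rw [lamE, min_eq_left h, max_eq_right h]

theorem lamE_of_ge {A : Type*} (lam : ℕ → ℕ → A) {u v : ℕ} (h : v ≤ u) :
    lamE lam u v = lam v u := by
  rw [lamE, min_eq_right h, max_eq_left h]

/-- The hypotheses on the `λ`-lengths of the edges of the triangulation. -/
def PosEdges {A : Type*} (n : ℕ) (Pos : Set A) (lam : ℕ → ℕ → A) : Prop :=
  ∀ u v, u < v → ZEdge n u v → lam u v ∈ Pos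

theorem PosEdges.one {A : Type*} {n : ℕ} {Pos : Set A} {lam : ℕ → ℕ → A}
    (h : PosEdges n Pos lam) {k : ℕ}
    (hk : 1 ≤ k) (hkn : k + 1 ≤ n) : lam k (k + 1) ∈ Pos :=
  h _ _ (by omega) ⟨by omega, by omega, by omega, by omega, by omega⟩

theorem PosEdges.two {A : Type*} {n : ℕ} {Pos : Set A} {lam : ℕ → ℕ → A}
    (h : PosEdges n Pos lam) {k : ℕ}
    (hk : 1 ≤ k) (hkn : k + 2 ≤ n) : lam k (k + 2) ∈ Pos :=
  h _ _ (by omega) ⟨by omega, by omega, by omega, by omega, by omega⟩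

section

variable {n : ℕ} {Pos : Set A} {sqrt : A → A} {lam : ℕ → ℕ → A} {θ : ℕ → A}

theorem inverse_mul (hP : IsSqrtCone Pos sqrt) {p q : A} (hp : p ∈ Pos) :
    Ring.inverse (p * q) = Ring.inverse p * Ring.inverse q := by
  have h : Commute q p := (hP.comm p hp q).symm
  rw [← h.eq, Ring.mul_inverse_rev' h]

theorem sigRoot_eq (hP : IsSqrtCone Pos sqrt) (hl : PosEdges n Pos lam) {i : ℕ} (hi : 1 ≤ i)
    (hin : i + 2 ≤ n) :
    sigRoot lam sqrt i = sqrt (lam i (i + 2)) *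
      (sqrt (Ring.inverse (lam i (i + 1))) * sqrt (Ring.inverse (lam (i + 1) (i + 2)))) := by
  have hc := hl.one hi (by omega)
  have hb := hl.one (k := i + 1) (by omega) (by omega)
  have he := hl.two hi hin
  rw [sigRoot, lamE_of_le lam (by omega), lamE_of_le lam (by omega), lamE_of_le lam (by omega),
    inverse_mul hP hc, hP.sqrt_mul _ he, hP.sqrt_mul]
  · exact hP.inverse_mem _ hc
  · exact hP.inverse_mem _ hb
  · exact hP.mul_mem _ (hP.inverse_mem _ hc) _ (hP.inverse_mem _ hb)

theorem sigRoot_mem (hP : IsSqrtCone Pos sqrt) (hl : PosEdges n Pos lam) {i : ℕ} (hi : 1 ≤ i)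
    (hin : i + 2 ≤ n) : sigRoot lam sqrt i ∈ Pos := by
  rw [sigRoot_eq hP hl hi hin]
  exact hP.mul_mem _ (hP.sqrt_mem _ (hl.two hi hin)) _
    (hP.mul_mem _ (hP.sqrt_mem _ (hP.inverse_mem _ (hl.one hi (by omega)))) _
      (hP.sqrt_mem _ (hP.inverse_mem _ (hl.one (by omega) hin))))

theorem evenWt_lengthen (hP : IsSqrtCone Pos sqrt) (hl : PosEdges n Pos lam) {k : ℕ}
    (hk : k + 2 ≤ n) {l : List V} (h : Good n (k + 1) l) :
    evenWt lam sqrt (lengthen k l) =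
      evenWt lam sqrt l * (Ring.inverse (lam (k + 1) (k + 2)) * lam k (k + 2)) := by
  have hb := hl.one (k := k + 1) (by omega) hk
  obtain ⟨t, ht, hodd, -⟩ := h.tail_spec
  rcases h.shape with ⟨s, rfl⟩ | ⟨-, s, rfl⟩ <;>
  · simp only [List.cons.injEq, true_and] at ht
    subst ht
    simp only [List.length_cons, Nat.odd_iff] at hodd
    have h0 : s.length % 2 = 0 := by omega
    simp [lengthen, evenWt_cons, stepWt, h0, hodd, lamE_of_ge, lamE_of_le, mul_assoc,
      ← mul_assoc (lam (k + 1) (k + 2)), hP.mul_inverse hb, Nat.add_mod,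
      show k + 1 + 1 = k + 2 from rfl]

theorem evenWt_skip {k : ℕ} {l : List V} (h : Good n (k + 2) l) :
    evenWt lam sqrt (Sum.inl k :: Sum.inl (k + 1) :: l) =
      evenWt lam sqrt l * (Ring.inverse (lam (k + 1) (k + 2)) * lam k (k + 1)) := by
  obtain ⟨t, rfl, hodd, -⟩ := h.tail_spec
  rw [Nat.odd_iff] at hodd
  simp [evenWt_cons, stepWt, hodd, lamE_of_ge, mul_assoc, Nat.add_mod]

theorem evenWt_jump {k i : ℕ} {l : List V} (h : Good n (i + 1) l) :
    evenWt lam sqrt (Sum.inl k :: Sum.inl (k + 1) :: Sum.inr k :: Sum.inr i :: l) =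
      evenWt lam sqrt l * (sigRoot lam sqrt i * (sigRoot lam sqrt k * lam k (k + 1))) := by
  obtain ⟨t, rfl, hodd, -⟩ := h.tail_spec
  rw [Nat.odd_iff] at hodd
  simp [evenWt_cons, stepWt, hodd, lamE_of_ge, sigRoot, mul_assoc, Nat.add_mod]

/-- The total weight of the super `T`-paths from `n` to `k`. -/
noncomputable def totalWt (n : ℕ) (lam : ℕ → ℕ → A) (θ : ℕ → A) (sqrt : A → A) (k : ℕ) : A :=
  ∑ᶠ l ∈ {l | Good n k l}, evenWt lam sqrt l * oddWt n θ l

theorem totalWt_of_le {k : ℕ} (hk : n ≤ k) : totalWt n lam θ sqrt k = 0 := by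
  rw [totalWt, setOf_good_empty hk, finsum_mem_empty]

theorem totalWt_base {k : ℕ} (hk : k + 1 = n) : totalWt n lam θ sqrt k = lam k n := by
  rw [totalWt, setOf_good_base hk, finsum_mem_singleton]
  simp [evenWt, oddWt, sigIdxs, sigIdx, stepsOf, stepWt, sortB,
    lamE_of_ge lam (show k ≤ n by omega)]

theorem totalWt_rec (hP : IsSqrtCone Pos sqrt) (hl : PosEdges n Pos lam)
    (hθ : ∀ i j, 1 ≤ i → i ≤ n - 2 → 1 ≤ j → j ≤ n - 2 → θ i * θ j = -(θ j * θ i))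
    {k : ℕ} (hk : 1 ≤ k) (hkn : k + 2 ≤ n) :
    totalWt n lam θ sqrt k =
      totalWt n lam θ sqrt (k + 1) * (Ring.inverse (lam (k + 1) (k + 2)) * lam k (k + 2)) +
      (totalWt n lam θ sqrt (k + 2) * (Ring.inverse (lam (k + 1) (k + 2)) * lam k (k + 1)) +
        ∑ i ∈ Finset.Icc (k + 1) (n - 2), totalWt n lam θ sqrt (i + 1) *
          (sigRoot lam sqrt i * (sigRoot lam sqrt k * lam k (k + 1)) *
            ordMul n θ k (θ i))) := by
  have hc := hl.one hk (by omega)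
  have hb := hP.inverse_mem _ (hl.one (k := k + 1) (by omega) hkn)
  have he := hl.two hk hkn
  rw [totalWt, finsum_good _ hkn]
  simp only [totalWt]
  rw [finsum_mem_mul' _ _ (finite_setOf_good n _), finsum_mem_mul' _ _ (finite_setOf_good n _)]
  congr 1
  · refine finsum_mem_congr rfl fun l h => ?_
    rw [evenWt_lengthen hP hl hkn h, oddWt, sigIdxs_lengthen h, ← oddWt, mul_assoc,
      hP.comm _ (hP.mul_mem _ hb _ he), mul_assoc]
  · congr 1
    · refine finsum_mem_congr rfl fun l h => ?_
      rw [evenWt_skip h, oddWt, sigIdxs_skip h, ← oddWt, mul_assoc,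
        hP.comm _ (hP.mul_mem _ hb _ hc), mul_assoc]
    · refine Finset.sum_congr rfl fun i hi => ?_
      rw [Finset.mem_Icc] at hi
      rw [finsum_mem_mul' _ _ (finite_setOf_good n _)]
      refine finsum_mem_congr rfl fun l h => ?_
      have hs : sigRoot lam sqrt i * (sigRoot lam sqrt k * lam k (k + 1)) ∈ Pos :=
        hP.mul_mem _ (sigRoot_mem hP hl (by omega) (by omega)) _
          (hP.mul_mem _ (sigRoot_mem hP hl hk hkn) _ hc)
      rw [evenWt_jump h, oddWt_jump hθ hk hi.1 hi.2 h, mul_assoc, ← mul_assoc _ (oddWt n θ l),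
        hP.comm _ hs]
      simp only [mul_assoc]

end

theorem smul_ordMul (z : Subring.center A) (n : ℕ) (θ : ℕ → A) (k : ℕ) (x : A) :
    z • ordMul n θ k x = ordMul n θ k (z • x) := by
  unfold ordMul
  split_ifs
  · rw [mul_smul_comm]
  · rw [smul_mul_assoc]

theorem ordMul_sum {ι : Type*} (s : Finset ι) (f : ι → A) (n : ℕ) (θ : ℕ → A) (k : ℕ) :
    ordMul n θ k (∑ i ∈ s, f i) = ∑ i ∈ s, ordMul n θ k (f i) := by
  unfold ordMul
  split_ifs
  · rw [Finset.mul_sum]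
  · rw [Finset.sum_mul]

/-- The downward super Ptolemy recursion for `λ_{k,n} = lamN k` and `[k,k+1,n] = muN k`. -/
structure IsFlipRecursion (n : ℕ) (Pos : Set A) (sqrt : A → A) (lam : ℕ → ℕ → A) (θ : ℕ → A)
    (lamN muN : ℕ → A) : Prop where
  lamN_mem : ∀ k, 1 ≤ k → k ≤ n - 1 → lamN k ∈ Pos
  lamN_base : lamN (n - 2) = lam (n - 2) n
  lamN_base' : lamN (n - 1) = lam (n - 1) n
  muN_base : muN (n - 2) = θ (n - 2)
  lamN_rec : ∀ k, 1 ≤ k → k ≤ n - 3 →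
    lam (k + 1) (k + 2) * lamN k
      = lam k (k + 2) * lamN (k + 1) + lam k (k + 1) * lamN (k + 2)
        + sqrt (lam k (k + 2) * lamN (k + 1) * (lam k (k + 1) * lamN (k + 2)))
          * ordMul n θ k (muN (k + 1))
  muN_rec : ∀ k, 1 ≤ k → k ≤ n - 3 →
    muN k * sqrt (lamN k * lam (k + 1) (k + 2))
      = θ k * sqrt (lam k (k + 2) * lamN (k + 1))
        + muN (k + 1) * sqrt (lam k (k + 1) * lamN (k + 2))

section

variable {n : ℕ} {Pos : Set A} {sqrt : A → A} {lam : ℕ → ℕ → A} {θ lamN muN : ℕ → A}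

/-- The `μ`-invariant `[k,k+1,n]`, normalised by `√(λ_{k,n}λ_{k+1,n}/λ_{k,k+1})`. -/
noncomputable def normMu (sqrt : A → A) (lam : ℕ → ℕ → A) (lamN muN : ℕ → A) (k : ℕ) : A :=
  sqrt (lamN k * lamN (k + 1) * Ring.inverse (lam k (k + 1))) * muN k

theorem IsFlipRecursion.normMu_eq (hP : IsSqrtCone Pos sqrt) (hl : PosEdges n Pos lam)
    (h : IsFlipRecursion n Pos sqrt lam θ lamN muN) {k : ℕ} (hk : 1 ≤ k) (hkn : k + 2 ≤ n) :
    normMu sqrt lam lamN muN k = sqrt (lamN k) *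
      (sqrt (lamN (k + 1)) * (sqrt (Ring.inverse (lam k (k + 1))) * muN k)) := by
  have hL := h.lamN_mem k hk (by omega)
  have hM := h.lamN_mem (k + 1) (by omega) (by omega)
  have hc := hP.inverse_mem _ (hl.one hk (by omega))
  rw [normMu, hP.sqrt_mul _ (hP.mul_mem _ hL _ hM) _ hc, hP.sqrt_mul _ hL _ hM, mul_assoc,
    mul_assoc]

theorem IsFlipRecursion.normMu_base (hP : IsSqrtCone Pos sqrt) (hl : PosEdges n Pos lam)
    (h : IsFlipRecursion n Pos sqrt lam θ lamN muN) {k : ℕ} (hk : 1 ≤ k) (hkn : k + 2 = n) :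
    normMu sqrt lam lamN muN k = lamN (k + 1) * (sigRoot lam sqrt k * θ k) := by
  subst hkn
  rw [h.normMu_eq hP hl hk le_rfl, sigRoot_eq hP hl hk le_rfl]
  have h1 : lamN k = lam k (k + 2) := h.lamN_base
  have h2 : lamN (k + 1) = lam (k + 1) (k + 2) := h.lamN_base'
  have h3 : muN k = θ k := h.muN_base
  rw [h1, h2, h3]
  obtain ⟨re, ie, hre, -, -, -, -⟩ := hP.exists_root (hl.two hk le_rfl)
  obtain ⟨rc, ic, -, hic, -, -, -⟩ := hP.exists_root (hl.one hk (by omega))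
  obtain ⟨rb, ib, hrb, hib, hbb, hb, -⟩ := hP.exists_root (hl.one (k := k + 1) (by omega) le_rfl)
  rw [hre, hic, show k + 2 = k + 1 + 1 from rfl, hrb, hib, hb]
  change re • rb • ic • θ k = (rb * rb) • (re * (ic * ib)) • θ k
  linear_combination (norm := module) - hbb • (re * rb * ic) • θ k

theorem IsFlipRecursion.normMu_rec (hP : IsSqrtCone Pos sqrt) (hl : PosEdges n Pos lam)
    (h : IsFlipRecursion n Pos sqrt lam θ lamN muN) {k : ℕ} (hk : 1 ≤ k) (hkn : k + 3 ≤ n) :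
    normMu sqrt lam lamN muN k = lamN (k + 1) * (sigRoot lam sqrt k * θ k) +
      normMu sqrt lam lamN muN (k + 1) := by
  have hmu := h.muN_rec k hk (by omega)
  have hL := h.lamN_mem k hk (by omega)
  have hM := h.lamN_mem (k + 1) (by omega) (by omega)
  have hN := h.lamN_mem (k + 2) (by omega) (by omega)
  have hc := hl.one hk (by omega)
  have hb := hl.one (k := k + 1) (by omega) (by omega)
  have he := hl.two hk (by omega)
  rw [h.normMu_eq hP hl hk (by omega), h.normMu_eq hP hl (by omega) (by omega),
    sigRoot_eq hP hl hk (by omega)]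
  rw [← hP.comm _ (hP.sqrt_mem _ (hP.mul_mem _ hL _ hb)),
    ← hP.comm _ (hP.sqrt_mem _ (hP.mul_mem _ he _ hM)),
    ← hP.comm _ (hP.sqrt_mem _ (hP.mul_mem _ hc _ hN)),
    hP.sqrt_mul _ hL _ hb, hP.sqrt_mul _ he _ hM, hP.sqrt_mul _ hc _ hN] at hmu
  obtain ⟨rL, iL, hrL, -, -, -, -⟩ := hP.exists_root hL
  obtain ⟨rM, iM, hrM, -, -, hM, -⟩ := hP.exists_root hM
  obtain ⟨rN, iN, hrN, -, -, -, -⟩ := hP.exists_root hN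
  obtain ⟨re, ie, hre, -, -, -, -⟩ := hP.exists_root he
  obtain ⟨rc, ic, hrc, hic, hcc, -, -⟩ := hP.exists_root hc
  obtain ⟨rb, ib, hrb, hib, hbb, -, -⟩ := hP.exists_root hb
  simp only [show k + 1 + 1 = k + 2 from rfl] at *
  rw [hrL, hrM, hrN, hre, hrc, hrb] at hmu
  rw [hrL, hrM, hrN, hre, hic, hib, hM]
  change (rL * rb) • muN k = (re * rM) • θ k + (rc * rN) • muN (k + 1) at hmu
  change rL • rM • ic • muN k = (rM * rM) • (re * (ic * ib)) • θ k + rM • rN • ib • muN (k + 1)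
  linear_combination (norm := module) (rM * ic * ib) • hmu - hbb • (rL * rM * ic) • muN k +
    hcc • (rM * rN * ib) • muN (k + 1)

theorem IsFlipRecursion.normMu_eq_sum (hP : IsSqrtCone Pos sqrt) (hl : PosEdges n Pos lam)
    (h : IsFlipRecursion n Pos sqrt lam θ lamN muN) {k : ℕ} (hk : 1 ≤ k) (hkn : k + 2 ≤ n) :
    normMu sqrt lam lamN muN k =
      ∑ i ∈ Finset.Icc k (n - 2), lamN (i + 1) * (sigRoot lam sqrt i * θ i) := by
  obtain ⟨d, hd⟩ : ∃ d, k + 2 + d = n := ⟨n - (k + 2), by omega⟩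
  induction d generalizing k with
  | zero =>
    rw [h.normMu_base hP hl hk (by omega), show n - 2 = k by omega, Finset.Icc_self,
      Finset.sum_singleton]
  | succ d ih =>
    rw [h.normMu_rec hP hl hk (by omega), ih (by omega) (by omega) (by omega),
      ← Finset.insert_Icc_add_one_left_eq_Icc (show k ≤ n - 2 by omega), Finset.sum_insert]
    simp

theorem IsFlipRecursion.lamN_rec_sum (hP : IsSqrtCone Pos sqrt) (hl : PosEdges n Pos lam)
    (h : IsFlipRecursion n Pos sqrt lam θ lamN muN) {k : ℕ} (hk : 1 ≤ k) (hkn : k + 3 ≤ n) :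
    lamN k =
      lamN (k + 1) * (Ring.inverse (lam (k + 1) (k + 2)) * lam k (k + 2)) +
      (lamN (k + 2) * (Ring.inverse (lam (k + 1) (k + 2)) * lam k (k + 1)) +
        ∑ i ∈ Finset.Icc (k + 1) (n - 2), lamN (i + 1) *
          (sigRoot lam sqrt i * (sigRoot lam sqrt k * lam k (k + 1)) *
            ordMul n θ k (θ i))) := by
  have hlam := h.lamN_rec k hk (by omega)
  have hM := h.lamN_mem (k + 1) (by omega) (by omega)
  have hN := h.lamN_mem (k + 2) (by omega) (by omega)
  have hc := hl.one hk (by omega)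
  have hb := hl.one (k := k + 1) (by omega) (by omega)
  have he := hl.two hk (by omega)
  have hsum : ∑ i ∈ Finset.Icc (k + 1) (n - 2), lamN (i + 1) *
      (sigRoot lam sqrt i * (sigRoot lam sqrt k * lam k (k + 1)) * ordMul n θ k (θ i)) =
      sigRoot lam sqrt k * (lam k (k + 1) *
        ordMul n θ k (normMu sqrt lam lamN muN (k + 1))) := by
    rw [h.normMu_eq_sum hP hl (by omega) (by omega), ordMul_sum, Finset.mul_sum, Finset.mul_sum]
    refine Finset.sum_congr rfl fun i hi => ?_
    rw [Finset.mem_Icc] at hi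
    obtain ⟨x, -, -, -, -, hx, -⟩ := hP.exists_root (h.lamN_mem (i + 1) (by omega) (by omega))
    obtain ⟨y, -, -, -, -, hy, -⟩ :=
      hP.exists_root (sigRoot_mem hP hl (i := i) (by omega) (by omega))
    obtain ⟨z, -, -, -, -, hz, -⟩ := hP.exists_root (sigRoot_mem hP hl hk (by omega))
    obtain ⟨c, -, -, -, -, hc, -⟩ := hP.exists_root hc
    rw [hx, hy, hz, hc]
    change (x * x) • ((y * y) * ((z * z) * (c * c))) • ordMul n θ k (θ i) =
      (z * z) • (c * c) • ordMul n θ k ((x * x) • (y * y) • θ i)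
    rw [← smul_ordMul, ← smul_ordMul]
    module
  rw [hsum, h.normMu_eq hP hl (by omega) (by omega), sigRoot_eq hP hl hk (by omega)]
  rw [hP.sqrt_mul _ (hP.mul_mem _ he _ hM) _ (hP.mul_mem _ hc _ hN), hP.sqrt_mul _ he _ hM,
    hP.sqrt_mul _ hc _ hN] at hlam
  obtain ⟨rM, -, hrM, -, -, hM, -⟩ := hP.exists_root hM
  obtain ⟨rN, -, hrN, -, -, hN, -⟩ := hP.exists_root hN
  obtain ⟨re, -, hre, -, -, he, -⟩ := hP.exists_root he
  obtain ⟨rc, ic, hrc, hic, hcc, hc, -⟩ := hP.exists_root hc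
  obtain ⟨rb, ib, hrb, hib, hbb, hb, hbi⟩ := hP.exists_root hb
  simp only [show k + 1 + 1 = k + 2 from rfl] at *
  rw [hrM, hrN, hre, hrc, hb, hM, hN, he, hc] at hlam
  rw [hrM, hrN, hre, hic, hib, hbi, hM, hN, he, hc]
  generalize hT : ordMul n θ k (muN (k + 1)) = T at hlam
  have hT' : ordMul n θ k (rM * (rN * (ib * muN (k + 1)))) = rM • rN • ib • T := by
    rw [← hT, smul_ordMul, smul_ordMul, smul_ordMul]
    rfl
  rw [hT']
  have e : ∀ z : Subring.center A, (z : A) = z • (1 : A) := fun z => (mul_one _).symm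
  replace hlam : (rb * rb) • lamN k = (re * re * (rM * rM)) • (1 : A) +
      (rc * rc * (rN * rN)) • (1 : A) + (re * rM * (rc * rN)) • T := by
    rw [← e, ← e]
    exact hlam
  suffices lamN k = (rM * rM * (ib * ib * (re * re))) • (1 : A) +
      ((rN * rN * (ib * ib * (rc * rc))) • (1 : A) +
        (re * (ic * ib)) • (rc * rc) • rM • rN • ib • T) by
    rw [← e, ← e] at this
    exact this
  linear_combination (norm := module) (ib * ib) • hlam - hbb • (rb * ib + 1) • lamN k -
    hcc • (ib * ib * re * rM * rN * rc) • T

theorem IsFlipRecursion.totalWt_eq (hP : IsSqrtCone Pos sqrt) (hl : PosEdges n Pos lam)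
    (hθ : ∀ i j, 1 ≤ i → i ≤ n - 2 → 1 ≤ j → j ≤ n - 2 → θ i * θ j = -(θ j * θ i))
    (h : IsFlipRecursion n Pos sqrt lam θ lamN muN) {k : ℕ} (hk : 1 ≤ k) (hkn : k + 1 ≤ n) :
    totalWt n lam θ sqrt k = lamN k := by
  induction hd : n - k using Nat.strong_induction_on generalizing k with
  | _ d ih =>
  subst hd
  obtain rfl | hkn := hkn.eq_or_lt
  · exact (totalWt_base rfl).trans h.lamN_base'.symm
  rw [totalWt_rec hP hl hθ hk hkn]
  obtain rfl | hkn' := (show k + 2 ≤ n from hkn).eq_or_lt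
  · have hb := hl.one (k := k + 1) (by omega) (by omega)
    rw [totalWt_base rfl, totalWt_of_le le_rfl, Finset.Icc_eq_empty (by omega), ← mul_assoc,
      hP.mul_inverse hb]
    simpa using h.lamN_base.symm
  · rw [h.lamN_rec_sum hP hl hk hkn', ih _ (by omega) (by omega) (by omega) rfl,
      ih _ (by omega) (by omega) (by omega) rfl]
    congr 2
    refine Finset.sum_congr rfl fun i hi => ?_
    rw [Finset.mem_Icc] at hi
    rw [ih _ (by omega) (by omega) (by omega) rfl]

end

/-- Theorem 6.4(a) of the paper.  Zig-zag triangulation of the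
`n`-gon with triangles `θ_i = (i, i+1, i+2)` and the default orientation
`2 → 3 → ⋯ → n-1`.  We work in a `ℚ`-algebra with a positive cone `Pos` of
central invertible even elements and a coherent multiplicative choice of square
roots `sqrt`; `lam u v` (for `u < v`) are the `λ`-lengths of the edges of the
triangulation, `θ i` the odd `μ`-invariants of the triangles, and
`lamN k = λ_{k,n}`, `muN k = [k,k+1,n]` are defined by the downward super
Ptolemy recursion obtained by flipping the arcs `(n-1,n-2), …, (k+2,k+1)`
(the order of the odd product in the `λ`-recursion being dictated by the
orientation: the `μ`-invariant of the triangle to the right of the oriented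
flipped diagonal comes first).  Then for every `1 ≤ k ≤ n-2`:
`√(λ_{k,n}λ_{k+1,n}/λ_{k,k+1})·[k,k+1,n]
   = Σ_{i=k}^{n-2} Σ_{t ∈ 𝒯_{n,i+1}} wt(t)·wt(σ_i)`. -/
theorem zigzag_mu_invariant_expansion
    (A : Type*) [Ring A] [Algebra ℚ A] (n : ℕ) (hn : 4 ≤ n)
    (Pos : Set A) (sqrt : A → A)
    (hPosAdd : ∀ p ∈ Pos, ∀ q ∈ Pos, p + q ∈ Pos)
    (hPosMul : ∀ p ∈ Pos, ∀ q ∈ Pos, p * q ∈ Pos)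
    (hPosInv : ∀ p ∈ Pos, Ring.inverse p ∈ Pos)
    (hPosCentral : ∀ p ∈ Pos, ∀ x : A, p * x = x * p)
    (hPosUnit : ∀ p ∈ Pos, IsUnit p)
    (hsqrtSq : ∀ p ∈ Pos, sqrt p * sqrt p = p)
    (hsqrtMem : ∀ p ∈ Pos, sqrt p ∈ Pos)
    (hsqrtMul : ∀ p ∈ Pos, ∀ q ∈ Pos, sqrt (p * q) = sqrt p * sqrt q)
    (lam : ℕ → ℕ → A) (θ : ℕ → A) (lamN muN : ℕ → A)
    (hlamP : ∀ u v, u < v → ZEdge n u v → lam u v ∈ Pos)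
    (hlamNP : ∀ k, 1 ≤ k → k ≤ n - 2 → lamN k ∈ Pos)
    (hθ0 : ∀ i, 1 ≤ i → i ≤ n - 2 → θ i * θ i = 0)
    (hθanti : ∀ i j, 1 ≤ i → i ≤ n - 2 → 1 ≤ j → j ≤ n - 2 →
      θ i * θ j = -(θ j * θ i))
    -- base cases: `λ_{n-2,n}` and `λ_{n-1,n}` are edges, `[n-2,n-1,n] = θ_{n-2}`
    (hbase1 : lamN (n - 2) = lam (n - 2) n)
    (hbase2 : lamN (n - 1) = lam (n - 1) n)
    (hbase3 : muN (n - 2) = θ (n - 2))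
    -- downward super Ptolemy recursion for the λ-lengths (flip of `(k+1,k+2)`)
    (hrecLam : ∀ k, 1 ≤ k → k ≤ n - 3 →
      lam (k + 1) (k + 2) * lamN k
        = lam k (k + 2) * lamN (k + 1) + lam k (k + 1) * lamN (k + 2)
          + sqrt (lam k (k + 2) * lamN (k + 1) * (lam k (k + 1) * lamN (k + 2)))
            * (if thetaRight n k then θ k * muN (k + 1) else muN (k + 1) * θ k))
    -- downward super Ptolemy recursion for the μ-invariants
    (hrecMu : ∀ k, 1 ≤ k → k ≤ n - 3 →
      muN k * sqrt (lamN k * lam (k + 1) (k + 2))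
        = θ k * sqrt (lam k (k + 2) * lamN (k + 1))
          + muN (k + 1) * sqrt (lam k (k + 1) * lamN (k + 2))) :
    ∀ k, 1 ≤ k → k ≤ n - 2 →
      sqrt (lamN k * lamN (k + 1) * Ring.inverse (lam k (k + 1))) * muN k
        = ∑ i ∈ Finset.Icc k (n - 2),
            (∑ᶠ t : SuperTPath n (i + 1) true, wt n lam θ sqrt t)
              * sigWt lam θ sqrt i := by
  intro k hk hkn
  have hP : IsSqrtCone Pos sqrt :=
    ⟨hPosMul, hPosInv, hPosCentral, hPosUnit, hsqrtSq, hsqrtMem, hsqrtMul⟩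
  have hl : PosEdges n Pos lam := hlamP
  have h : IsFlipRecursion n Pos sqrt lam θ lamN muN := by
    refine ⟨fun k hk hkn => ?_, hbase1, hbase2, hbase3, hrecLam, hrecMu⟩
    obtain rfl | hkn := hkn.eq_or_lt
    · rw [hbase2]
      exact hlamP _ _ (by omega) ⟨by omega, by omega, by omega, by omega, by omega⟩
    · exact hlamNP k hk (by omega)
  refine (h.normMu_eq_sum hP hl hk (by omega)).trans (Finset.sum_congr rfl fun i hi => ?_)
  rw [Finset.mem_Icc] at hi
  rw [finsum_wt (by omega), ← totalWt, h.totalWt_eq hP hl hθanti (by omega) (by omega)]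
  rfl

end ZigZag
end

section
/- Pentagon relation: Let A be a ℚ-algebra. Let a, b, c, d, e, x_1, x_2 be central invertible even elements (sides and the two diagonals of a pentagon), with a coherent choice of central square roots (multiplicative on all products that occur, and extended to even-plus-odd elements by the rule √(A₀+βΣ) = √A₀ + (β/(2√A₀))Σ), and let θ_1, θ_2, θ_3 be odd elements: each squares to 0, any two anticommute, and they commute with even elements. Define successively: x_1·x_3 = ad + e·x_2 + √(a·d·e·x_2)·θ_1θ_2, θ_4 = (√(ad)·θ_1 − √(e x_2)·θ_2)/√(x_1x_3), θ_5 = (√(ad)·θ_2 + √(e x_2)·θ_1)/√(x_1x_3); x_2·x_4 = ac + b·x_3 + √(a·c·b·x_3)·θ_5θ_3, θ_6 = (√(ac)·θ_3 + √(b x_3)·θ_5)/√(x_2x_4), θ_7 = (√(ac)·θ_5 − √(b x_3)·θ_3)/√(x_2x_4); x_3·x_5 = ce + d·x_4 + √(c·d·e·x_4)·θ_4θ_7, θ_8 = (√(ce)·θ_4 − √(d x_4)·θ_7)/√(x_3x_5), θ_9 = (√(ce)·θ_7 + √(d x_4)·θ_4)/√(x_3x_5); x_4·x_6 = be + a·x_5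 + √(a·b·e·x_5)·θ_9θ_6, θ_10 = (√(be)·θ_6 + √(a x_5)·θ_9)/√(x_4x_6), θ_11 = (√(be)·θ_9 − √(a x_5)·θ_6)/√(x_4x_6); x_5·x_7 = bd + c·x_6 + √(b·c·d·x_6)·θ_8θ_11, θ_12 = (√(bd)·θ_11 + √(c x_6)·θ_8)/√(x_5x_7), θ_13 = (√(bd)·θ_8 − √(c x_6)·θ_11)/√(x_5x_7). Then x_6 = x_1, x_7 = x_2, θ_10 = θ_1, θ_12 = −θ_2, and θ_13 = θ_3. -/
/-- The super Ptolemy relations for one flip, over a commutative ring `R` of even scalars: `p`, `q`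
and `s` stand for `√(ac)`, `√(bd)` and `√(ef)`, and the pair of `μ`-invariants `(σ, θ)` is
replaced by `(σ', θ')`. -/
structure SuperPtolemyFlip {R M : Type*} [CommRing R] [Ring M] [Algebra R M]
    (p q s : R) (σ θ σ' θ' : M) : Prop where
  len : s ^ 2 • (1 : M) = (p ^ 2 + q ^ 2) • (1 : M) + (p * q) • (σ * θ)
  left : s • σ' = p • σ - q • θ
  right : s • θ' = p • θ + q • σ

namespace SuperPtolemyFlip

variable {R M : Type*} [CommRing R] [Ring M] [Algebra R M]
  {p q s : R} {σ θ σ' θ' : M}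

theorem sq_smul_left (h : SuperPtolemyFlip p q s σ θ σ' θ')
    (hσ : σ * σ = 0) (hσθ : σ * θ = -(θ * σ)) :
    s ^ 2 • σ = (p ^ 2 + q ^ 2) • σ := by
  have h0 : σ * θ * σ = 0 := by rw [hσθ, neg_mul, mul_assoc, hσ, mul_zero, neg_zero]
  simpa [add_mul, h0] using congrArg (· * σ) h.len

theorem sq_smul_right (h : SuperPtolemyFlip p q s σ θ σ' θ') (hθ : θ * θ = 0) :
    s ^ 2 • θ = (p ^ 2 + q ^ 2) • θ := by
  have h0 : σ * θ * θ = 0 := by rw [mul_assoc, hθ, mul_zero]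
  simpa [add_mul, h0] using congrArg (· * θ) h.len

theorem smul_left_eq (h : SuperPtolemyFlip p q s σ θ σ' θ') (hs : IsUnit s)
    (hσ : σ * σ = 0) (hσθ : σ * θ = -(θ * σ)) :
    s • σ = p • σ' + q • θ' := by
  rw [← hs.smul_left_cancel]
  linear_combination (norm := module)
    h.sq_smul_left hσ hσθ - p • h.left - q • h.right

theorem smul_right_eq (h : SuperPtolemyFlip p q s σ θ σ' θ') (hs : IsUnit s)
    (hθ : θ * θ = 0) : s • θ = p • θ' - q • σ' := by
  rw [← hs.smul_left_cancel]
  linear_combination (norm := module)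
    h.sq_smul_right hθ - p • h.right + q • h.left

theorem mul_eq (h : SuperPtolemyFlip p q s σ θ σ' θ') (hs : IsUnit s)
    (hσ : σ * σ = 0) (hθ : θ * θ = 0) (hσθ : σ * θ = -(θ * σ)) :
    σ' * θ' = σ * θ := by
  have hl : s ^ 2 • (σ' * θ') = (p • σ - q • θ) * (p • θ + q • σ) := by
    rw [← h.left, ← h.right, smul_mul_smul_comm, sq]
  have hm := congrArg (· * θ) (h.sq_smul_left hσ hσθ)
  simp only [sub_mul, mul_add, smul_mul_assoc, mul_smul_comm, hσ, hθ] at hl hm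
  rw [← (hs.pow 2).smul_left_cancel]
  linear_combination (norm := module) hl - hm - q ^ 2 • hσθ

theorem right_mul_self (h : SuperPtolemyFlip p q s σ θ σ' θ') (hs : IsUnit s)
    (hσ : σ * σ = 0) (hθ : θ * θ = 0) (hσθ : σ * θ = -(θ * σ)) : θ' * θ' = 0 := by
  have hr : s ^ 2 • (θ' * θ') = (p • θ + q • σ) * (p • θ + q • σ) := by
    rw [← h.right, smul_mul_smul_comm, sq]
  simp only [add_mul, mul_add, smul_mul_assoc, mul_smul_comm, hσ, hθ] at hr
  rw [← (hs.pow 2).smul_left_cancel]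
  linear_combination (norm := module) hr + (p * q) • hσθ

theorem right_mul_anticomm (h : SuperPtolemyFlip p q s σ θ σ' θ') (hs : IsUnit s) {τ : M}
    (hσ : σ * τ = -(τ * σ)) (hθ : θ * τ = -(τ * θ)) : θ' * τ = -(τ * θ') := by
  have hl := congrArg (· * τ) h.right
  have hr := congrArg (τ * ·) h.right
  simp only [add_mul, mul_add, smul_mul_assoc, mul_smul_comm] at hl hr
  rw [← hs.smul_left_cancel]
  linear_combination (norm := module) hl + hr + p • hθ + q • hσ

end SuperPtolemyFlip

/-- After three flips of a decorated super pentagon, the two remaining flips can be performed so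
as to return to the original `λ`-lengths and `μ`-invariants, with `θ₂` negated. -/
theorem SuperPtolemyFlip.exists_pentagon_closure {R M : Type*} [CommRing R] [Ring M] [Algebra R M]
    {a b c d e x₁ x₂ x₃ x₄ x₅ : R} {θ₁ θ₂ θ₃ θ₄ θ₅ θ₆ θ₇ θ₈ θ₉ : M}
    (hx₁ : IsUnit x₁) (hx₂ : IsUnit x₂) (hx₃ : IsUnit x₃) (hx₄ : IsUnit x₄) (hx₅ : IsUnit x₅)
    (h₁₁ : θ₁ * θ₁ = 0) (h₂₂ : θ₂ * θ₂ = 0) (h₃₃ : θ₃ * θ₃ = 0)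
    (h₁₂ : θ₁ * θ₂ = -(θ₂ * θ₁)) (h₁₃ : θ₁ * θ₃ = -(θ₃ * θ₁)) (h₂₃ : θ₂ * θ₃ = -(θ₃ * θ₂))
    (f₁ : SuperPtolemyFlip (a * d) (e * x₂) (x₁ * x₃) θ₁ θ₂ θ₄ θ₅)
    (f₂ : SuperPtolemyFlip (a * c) (b * x₃) (x₂ * x₄) θ₅ θ₃ θ₇ θ₆)
    (f₃ : SuperPtolemyFlip (c * e) (d * x₄) (x₃ * x₅) θ₄ θ₇ θ₈ θ₉) :
    ∃ θ₁₁ : M, SuperPtolemyFlip (b * e) (a * x₅) (x₄ * x₁) θ₉ θ₆ θ₁₁ θ₁ ∧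
      SuperPtolemyFlip (b * d) (c * x₁) (x₅ * x₂) θ₈ θ₁₁ θ₃ (-θ₂) := by
  have h₁₃u := hx₁.mul hx₃
  have h₂₄u := hx₂.mul hx₄
  have h₃₅u := hx₃.mul hx₅
  have h₂₅u := hx₂.mul hx₅
  have h₅₅ := f₁.right_mul_self h₁₃u h₁₁ h₂₂ h₁₂
  have h₅₃ : θ₅ * θ₃ = -(θ₃ * θ₅) := f₁.right_mul_anticomm h₁₃u h₁₃ h₂₃
  have h₄₅ : θ₄ * θ₅ = θ₁ * θ₂ := f₁.mul_eq h₁₃u h₁₁ h₂₂ h₁₂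
  have h₇₆ : θ₇ * θ₆ = θ₅ * θ₃ := f₂.mul_eq h₂₄u h₅₅ h₃₃ h₅₃
  have e₁ := f₁.smul_left_eq h₁₃u h₁₁ h₁₂
  have e₂ := f₁.smul_right_eq h₁₃u h₂₂
  have e₅ := f₂.smul_left_eq h₂₄u h₅₅ h₅₃
  have sq₅ := f₂.sq_smul_left h₅₅ h₅₃
  have e₂₃ := congrArg (· * θ₃) e₂
  have e₄₇ := congrArg (θ₄ * ·) f₂.left
  have e₄₅ := congrArg (θ₄ * ·) e₅
  have e₉₆ := congrArg (· * θ₆) f₃.right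
  simp only [sub_mul, mul_sub, add_mul, mul_add, smul_mul_assoc, mul_smul_comm, h₄₅, h₇₆]
    at e₂₃ e₄₇ e₄₅ e₉₆
  have len₅ : (x₅ * x₂) ^ 2 • (1 : M)
      = ((b * d) ^ 2 + (c * x₁) ^ 2) • (1 : M) + (b * d * (c * x₁)) • (θ₂ * θ₃) := by
    rw [← (hx₃.pow 2).smul_left_cancel]
    linear_combination (norm := module) x₂ ^ 2 • f₃.len + d ^ 2 • f₂.len - c ^ 2 • f₁.len
      + (c * d * e * x₂) • e₄₇ - (c * d * b * x₃) • e₂₃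
  have e₈ : (x₂ * x₅) • θ₈ = (b * d) • θ₃ - (c * x₁) • θ₂ := by
    rw [← hx₃.smul_left_cancel]
    linear_combination (norm := module) x₂ • f₃.left - d • f₂.left + c • e₂
  have e₁₀ : (x₄ * x₁) • θ₁ = (b * e) • θ₆ + (a * x₅) • θ₉ := by
    rw [← (h₂₄u.mul hx₃).smul_left_cancel]
    linear_combination (norm := module) (x₂ * x₄ ^ 2) • e₁ - (b * e * x₃) • f₂.right
      - (a * x₂ * x₄) • f₃.right - (a * c * e) • f₂.left + e • sq₅
  have len₄ : (x₄ * x₁) ^ 2 • (1 : M)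
      = ((b * e) ^ 2 + (a * x₅) ^ 2) • (1 : M) + (b * e * (a * x₅)) • (θ₉ * θ₆) := by
    rw [← (hx₃.pow 2).smul_left_cancel]
    linear_combination (norm := module) x₄ ^ 2 • f₁.len + e ^ 2 • f₂.len - a ^ 2 • f₃.len
      - (a * b * e * x₃) • e₉₆ + (a * d * e * x₄) • e₄₅
  have h₄₇₅ : θ₄ * θ₇ * θ₅ = θ₄ * θ₆ * θ₃ := by
    have hl := congrArg (θ₄ * · * θ₅) f₂.left
    have hr := congrArg (θ₄ * · * θ₃) f₂.right
    simp only [sub_mul, mul_sub, add_mul, mul_add, smul_mul_assoc, mul_smul_comm, mul_assoc,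
      h₃₃, h₅₅, mul_zero] at hl hr
    rw [← h₂₄u.smul_left_cancel, mul_assoc, mul_assoc]
    have h₄₅₃ := congrArg (θ₄ * ·) h₅₃
    simp only [mul_neg] at h₄₅₃
    linear_combination (norm := module) hl - hr - (b * x₃) • h₄₅₃
  have e₉₆₃ := congrArg (· * θ₃) e₉₆
  have len₄₃ := congrArg (· * θ₃) len₄
  have len₃₅ := congrArg (· * θ₅) f₃.len
  have len₅₂ := congrArg (· * θ₂) len₅
  have len₅₃ := congrArg (· * θ₃) len₅
  have h₅₃₃ : θ₅ * θ₃ * θ₃ = 0 := by rw [mul_assoc, h₃₃, mul_zero]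
  have h₂₃₃ : θ₂ * θ₃ * θ₃ = 0 := by rw [mul_assoc, h₃₃, mul_zero]
  have h₂₃₂ : θ₂ * θ₃ * θ₂ = 0 := by rw [h₂₃, neg_mul, mul_assoc, h₂₂, mul_zero, neg_zero]
  simp only [add_mul, smul_mul_assoc, one_mul, h₅₃₃, h₂₃₃, h₂₃₂, h₄₇₅]
    at e₉₆₃ len₄₃ len₃₅ len₅₂ len₅₃
  obtain ⟨θ₁₁, e₁₁⟩ : ∃ θ : M, (x₂ * x₅) • θ = -((b * d) • θ₂ + (c * x₁) • θ₃) := by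
    obtain ⟨u, hu⟩ := h₂₅u
    exact ⟨u⁻¹ • -((b * d) • θ₂ + (c * x₁) • θ₃), by rw [← hu]; exact smul_inv_smul u _⟩
  have e₈₁₁ : θ₈ * θ₁₁ = θ₂ * θ₃ := by
    have h := smul_mul_smul_comm (x₂ * x₅) θ₈ (x₂ * x₅) θ₁₁
    have hm := congrArg (· * θ₃) len₅₂
    rw [e₈, e₁₁] at h
    simp only [sub_mul, mul_add, mul_neg, add_mul, smul_mul_assoc, mul_smul_comm, h₂₂, h₃₃,
      zero_mul, smul_zero] at h hm
    rw [← (h₂₅u.pow 2).smul_left_cancel]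
    linear_combination (norm := module) -h - hm - (b * d) ^ 2 • h₂₃
  refine ⟨θ₁₁, ⟨len₄, ?_, e₁₀⟩, ⟨by rw [len₅, e₈₁₁], ?_, ?_⟩⟩
  · rw [← ((hx₂.mul hx₃).mul (hx₄.mul hx₅)).smul_left_cancel]
    linear_combination (norm := module) (x₃ * x₄ ^ 2 * x₁) • e₁₁ - (b * e * x₂ * x₄) • f₃.right
      - (b * c * e ^ 2) • f₂.left + (a * x₅ ^ 2 * x₃) • f₂.right - (b * d * x₄ ^ 2) • e₂
      - (c * x₃) • len₄₃ - (a * b * c * e) • e₉₆₃ + (a * b) • len₃₅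
  · rw [← h₂₅u.smul_left_cancel]
    linear_combination (norm := module) len₅₃ - (b * d) • e₈ + (c * x₁) • e₁₁
  · rw [← h₂₅u.smul_left_cancel]
    linear_combination (norm := module) -len₅₂ - (b * d) • e₁₁ - (c * x₁) • e₈

/-- the pentagon relation; appendix of the paper.  Consider a
pentagon with sides `a, b, c, d, e` and diagonals `x₁, x₂`, with odd
`μ`-invariants `θ₁, θ₂, θ₃`.  We work in a `ℚ`-algebra `A` together with a
"positive cone" `Pos ⊆ A` of central invertible even elements closed under
addition, multiplication and `Ring.inverse`, and a coherent choice of square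
roots `sqrt` on `Pos`: `sqrt p` is central, lies in `Pos`, squares to `p`, and is
multiplicative.  (This encodes the distinguished square roots with positive body,
multiplicative on all products that occur and extended to even-plus-odd elements
by `√(A₀+βΣ) = √A₀ + (β/(2√A₀))Σ`.)  The five successive super Ptolemy flips of
the diagonals `x₁, x₂, x₃, x₄, x₅` are imposed as the hypotheses `flip₁`–`flip₅`
(each giving the new `λ`-length and the two new `μ`-invariants).  Then the
pentagon closes up: `x₆ = x₁`, `x₇ = x₂`, `θ₁₀ = θ₁`, `θ₁₂ = −θ₂`, `θ₁₃ = θ₃`. -/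
theorem pentagon_relation
    (A : Type*) [Ring A] [Algebra ℚ A]
    (Pos : Set A) (sqrt : A → A)
    (hPosAdd : ∀ p ∈ Pos, ∀ q ∈ Pos, p + q ∈ Pos)
    (hPosMul : ∀ p ∈ Pos, ∀ q ∈ Pos, p * q ∈ Pos)
    (hPosInv : ∀ p ∈ Pos, Ring.inverse p ∈ Pos)
    (hPosCentral : ∀ p ∈ Pos, ∀ x : A, p * x = x * p)
    (hPosUnit : ∀ p ∈ Pos, IsUnit p)
    (hsqrtSq : ∀ p ∈ Pos, sqrt p * sqrt p = p)
    (hsqrtMem : ∀ p ∈ Pos, sqrt p ∈ Pos)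
    (hsqrtMul : ∀ p ∈ Pos, ∀ q ∈ Pos, sqrt (p * q) = sqrt p * sqrt q)
    -- the λ-lengths: sides, diagonals, and the flipped diagonals
    (a b c d e x1 x2 x3 x4 x5 x6 x7 : A)
    (haP : a ∈ Pos) (hbP : b ∈ Pos) (hcP : c ∈ Pos) (hdP : d ∈ Pos) (heP : e ∈ Pos)
    (hx1 : x1 ∈ Pos) (hx2 : x2 ∈ Pos) (hx3 : x3 ∈ Pos) (hx4 : x4 ∈ Pos)
    (hx5 : x5 ∈ Pos) (hx6 : x6 ∈ Pos) (hx7 : x7 ∈ Pos)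
    -- the odd μ-invariants of the initial triangulation
    (θ1 θ2 θ3 : A)
    (h11 : θ1 * θ1 = 0) (h22 : θ2 * θ2 = 0) (h33 : θ3 * θ3 = 0)
    (h12 : θ1 * θ2 = -(θ2 * θ1)) (h13 : θ1 * θ3 = -(θ3 * θ1))
    (h23 : θ2 * θ3 = -(θ3 * θ2))
    (θ4 θ5 θ6 θ7 θ8 θ9 θ10 θ11 θ12 θ13 : A)
    -- first flip (of x₁)
    (flip1a : x1 * x3 = a * d + e * x2 + sqrt (a * d * e * x2) * (θ1 * θ2))
    (flip1b : θ4 * sqrt (x1 * x3) = sqrt (a * d) * θ1 - sqrt (e * x2) * θ2)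
    (flip1c : θ5 * sqrt (x1 * x3) = sqrt (a * d) * θ2 + sqrt (e * x2) * θ1)
    -- second flip (of x₂)
    (flip2a : x2 * x4 = a * c + b * x3 + sqrt (a * c * b * x3) * (θ5 * θ3))
    (flip2b : θ6 * sqrt (x2 * x4) = sqrt (a * c) * θ3 + sqrt (b * x3) * θ5)
    (flip2c : θ7 * sqrt (x2 * x4) = sqrt (a * c) * θ5 - sqrt (b * x3) * θ3)
    -- third flip (of x₃)
    (flip3a : x3 * x5 = c * e + d * x4 + sqrt (c * d * e * x4) * (θ4 * θ7))
    (flip3b : θ8 * sqrt (x3 * x5) = sqrt (c * e) * θ4 - sqrt (d * x4) * θ7)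
    (flip3c : θ9 * sqrt (x3 * x5) = sqrt (c * e) * θ7 + sqrt (d * x4) * θ4)
    -- fourth flip (of x₄)
    (flip4a : x4 * x6 = b * e + a * x5 + sqrt (a * b * e * x5) * (θ9 * θ6))
    (flip4b : θ10 * sqrt (x4 * x6) = sqrt (b * e) * θ6 + sqrt (a * x5) * θ9)
    (flip4c : θ11 * sqrt (x4 * x6) = sqrt (b * e) * θ9 - sqrt (a * x5) * θ6)
    -- fifth flip (of x₅)
    (flip5a : x5 * x7 = b * d + c * x6 + sqrt (b * c * d * x6) * (θ8 * θ11))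
    (flip5b : θ12 * sqrt (x5 * x7) = sqrt (b * d) * θ11 + sqrt (c * x6) * θ8)
    (flip5c : θ13 * sqrt (x5 * x7) = sqrt (b * d) * θ8 - sqrt (c * x6) * θ11) :
    x6 = x1 ∧ x7 = x2 ∧ θ10 = θ1 ∧ θ12 = -θ2 ∧ θ13 = θ3 := by
  have lift : ∀ p ∈ Pos, ∃ r : Subring.center A,
      IsUnit r ∧ (p ∈ Pos ∧ sqrt p = r) ∧ p = ((r ^ 2 : Subring.center A) : A) := by
    intro p hp
    have hs := hsqrtMem p hp
    have hmem : ∀ y ∈ Pos, y ∈ Subring.center A := fun y hy =>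
      Subring.mem_center_iff.2 fun g => (hPosCentral y hy g).symm
    refine ⟨⟨sqrt p, hmem _ hs⟩, IsUnit.of_mul_eq_one ⟨_, hmem _ (hPosInv _ hs)⟩
      (Subtype.ext (Ring.mul_inverse_cancel _ (hPosUnit _ hs))), ⟨hp, rfl⟩, ?_⟩
    simp [sq, hsqrtSq p hp]
  have sqrt_mul : ∀ {p q : A} {r s : Subring.center A}, p ∈ Pos ∧ sqrt p = r →
      q ∈ Pos ∧ sqrt q = s → p * q ∈ Pos ∧ sqrt (p * q) = ((r * s : Subring.center A) : A) := by
    rintro p q r s ⟨hp, hr⟩ ⟨hq, hs⟩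
    exact ⟨hPosMul p hp q hq, by rw [hsqrtMul p hp q hq, hr, hs, Subring.coe_mul]⟩
  obtain ⟨a', -, ra, -⟩ := lift a haP
  obtain ⟨b', -, rb, -⟩ := lift b hbP
  obtain ⟨c', -, rc, -⟩ := lift c hcP
  obtain ⟨d', -, rd, -⟩ := lift d hdP
  obtain ⟨e', -, re, -⟩ := lift e heP
  obtain ⟨y1, u1, r1, hy1⟩ := lift x1 hx1
  obtain ⟨y2, u2, r2, hy2⟩ := lift x2 hx2
  obtain ⟨y3, u3, r3, -⟩ := lift x3 hx3
  obtain ⟨y4, u4, r4, -⟩ := lift x4 hx4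
  obtain ⟨y5, u5, r5, -⟩ := lift x5 hx5
  obtain ⟨y6, -, r6, hy6⟩ := lift x6 hx6
  obtain ⟨y7, -, r7, hy7⟩ := lift x7 hx7
  have mk : ∀ {p q s r : Subring.center A} {P Q S T σ θ σ' θ' : A},
      P ∈ Pos ∧ sqrt P = p → Q ∈ Pos ∧ sqrt Q = q → S ∈ Pos ∧ sqrt S = s →
      T ∈ Pos ∧ sqrt T = r → r = p * q → S = P + Q + sqrt T * (σ * θ) →
      σ' * sqrt S = sqrt P * σ - sqrt Q * θ → θ' * sqrt S = sqrt P * θ + sqrt Q * σ →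
      SuperPtolemyFlip p q s σ θ σ' θ' := by
    rintro p q s r P Q S T σ θ σ' θ' ⟨hP, hp⟩ ⟨hQ, hq⟩ ⟨hS, hs⟩ ⟨-, hr⟩ rfl hlen hl hr'
    rw [← hPosCentral _ (hsqrtMem S hS), hp, hq, hs] at hl hr'
    refine ⟨?_, hl, hr'⟩
    have hP2 := hsqrtSq P hP
    have hQ2 := hsqrtSq Q hQ
    have hS2 := hsqrtSq S hS
    rw [hp] at hP2
    rw [hq] at hQ2
    rw [hs] at hS2
    rw [hr] at hlen
    simpa [Subring.smul_def, sq, hP2, hQ2, hS2] using hlen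
  have f1 : SuperPtolemyFlip (a' * d') (e' * y2) (y1 * y3) θ1 θ2 θ4 θ5 :=
    mk (sqrt_mul ra rd) (sqrt_mul re r2) (sqrt_mul r1 r3)
      (sqrt_mul (sqrt_mul (sqrt_mul ra rd) re) r2) (by ring) flip1a flip1b flip1c
  have f2 : SuperPtolemyFlip (a' * c') (b' * y3) (y2 * y4) θ5 θ3 θ7 θ6 :=
    mk (sqrt_mul ra rc) (sqrt_mul rb r3) (sqrt_mul r2 r4)
      (sqrt_mul (sqrt_mul (sqrt_mul ra rc) rb) r3) (by ring) flip2a flip2c flip2b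
  have f3 : SuperPtolemyFlip (c' * e') (d' * y4) (y3 * y5) θ4 θ7 θ8 θ9 :=
    mk (sqrt_mul rc re) (sqrt_mul rd r4) (sqrt_mul r3 r5)
      (sqrt_mul (sqrt_mul (sqrt_mul rc rd) re) r4) (by ring) flip3a flip3b flip3c
  have f4 : SuperPtolemyFlip (b' * e') (a' * y5) (y4 * y6) θ9 θ6 θ11 θ10 :=
    mk (sqrt_mul rb re) (sqrt_mul ra r5) (sqrt_mul r4 r6)
      (sqrt_mul (sqrt_mul (sqrt_mul ra rb) re) r5) (by ring) flip4a flip4c flip4b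
  have f5 : SuperPtolemyFlip (b' * d') (c' * y6) (y5 * y7) θ8 θ11 θ13 θ12 :=
    mk (sqrt_mul rb rd) (sqrt_mul rc r6) (sqrt_mul r5 r7)
      (sqrt_mul (sqrt_mul (sqrt_mul rb rc) rd) r6) (by ring) flip5a flip5c flip5b
  obtain ⟨θ, g4, g5⟩ := f1.exists_pentagon_closure u1 u2 u3 u4 u5 h11 h22 h33 h12 h13 h23 f2 f3
  have cancel : ∀ {x y z : Subring.center A}, IsUnit x →
      (x * y) ^ 2 • (1 : A) = (x * z) ^ 2 • (1 : A) → ((y ^ 2 : Subring.center A) : A) =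
        ((z ^ 2 : Subring.center A) : A) := by
    intro x y z hx h
    rw [mul_pow, mul_pow, mul_smul, mul_smul, (hx.pow 2).smul_left_cancel] at h
    simpa [Subring.smul_def] using h
  have x61 : x6 = x1 := by
    rw [hy6, hy1]
    exact cancel u4 (f4.len.trans g4.len.symm)
  have y61 : y6 = y1 := Subtype.ext (by rw [← r6.2, ← r1.2, x61])
  subst y61
  have h10 : θ10 = θ1 := (u4.mul u1).smul_left_cancel.1 (f4.right.trans g4.right.symm)
  have h11' : θ11 = θ := (u4.mul u1).smul_left_cancel.1 (f4.left.trans g4.left.symm)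
  subst h11'
  have x72 : x7 = x2 := by
    rw [hy7, hy2]
    exact cancel u5 (f5.len.trans g5.len.symm)
  have y72 : y7 = y2 := Subtype.ext (by rw [← r7.2, ← r2.2, x72])
  subst y72
  exact ⟨x61, x72, h10, (u5.mul u2).smul_left_cancel.1 (f5.right.trans g5.right.symm),
    (u5.mul u2).smul_left_cancel.1 (f5.left.trans g5.left.symm)⟩
end
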